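/- Let 1<p<∞ and let Ω ⊆ ℝ^N be an open set with E_p(Ω) < +∞. Suppose there exists k ∈ ℕ\{0} with λ_{k,p}^{LS}(Ω) < E_p(Ω). Let V ≥ 0 be a strongly confining potential, {ε_n} a decreasing infinitesimal sequence of positive numbers, V_n := ε_n V, and let u_{ℓ,n} ∈ S_p(Ω) ∩ W^{1,p}_0(Ω;V) be constrained critical points of G_n(φ) = ∫_Ω |∇φ|^p dx + ∫_Ω V_n |φ|^p dx at the levels λ_{ℓ,p}^{LS}(Ω;V_n). Then for every ℓ ∈ {1,…,k} there exist an index n_ℓ ∈ ℕ and two positive constants C_ℓ and α_ℓ, both independent of n, such that |u_{ℓ,n}(x)| ≤ C_ℓ e^{−α_ℓ |x|} for a.e. x ∈ Ω and for every n ≥ n_ℓ. -/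

import Mathlib

open MeasureTheory Filter Topology Metric Set ENNReal
open scoped RealInnerProductSpace

noncomputable section

/-- Euclidean space `ℝ^N`. -/
abbrev EucN (N : ℕ) := EuclideanSpace ℝ (Fin N)

/-- A test function on an open set `Ω ⊆ ℝ^N`: smooth, with compact support contained in `Ω`. -/
def IsTestFun {N : ℕ} (Ω : Set (EucN N)) (φ : EucN N → ℝ) : Prop :=
  ContDiff ℝ (⊤ : ℕ∞) φ ∧ HasCompactSupport φ ∧ tsupport φ ⊆ Ω

/-- Pairs `(u, g)` in `L^q × L^q`, thought of as a function together with its (weak) gradient. -/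
abbrev SobPair (N : ℕ) (q : ℝ≥0∞) :=
  Lp ℝ q (volume : Measure (EucN N)) × Lp (EucN N) q (volume : Measure (EucN N))

/-- A pair given (a.e.) by a test function and its gradient. -/
def IsTestPair {N : ℕ} (q : ℝ≥0∞) (Ω : Set (EucN N)) (w : SobPair N q) : Prop :=
  ∃ ψ : EucN N → ℝ, IsTestFun Ω ψ ∧ (⇑w.1 =ᵐ[volume] ψ) ∧
    (⇑w.2 =ᵐ[volume] fun x => gradient ψ x)

theorem fact_one_le_ofReal {p : ℝ} (hp : 1 ≤ p) : Fact (1 ≤ ENNReal.ofReal p) :=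
  ⟨ENNReal.one_le_ofReal.mpr hp⟩

/-- The Sobolev space `W^{1,p}_0(Ω)`, realized as the closure in `L^p × L^p` of the set of
pairs (test function, its gradient). -/
def W10 (N : ℕ) (p : ℝ) (hp : 1 ≤ p) (Ω : Set (EucN N)) :
    Set (SobPair N (ENNReal.ofReal p)) :=
  letI := fact_one_le_ofReal hp
  closure {w | IsTestPair (ENNReal.ofReal p) Ω w}

/-- The first eigenvalue `λ_{1,p}(Ω)` (as an extended real, `∞` if there are no admissible
functions). -/
def lambda1p (N : ℕ) (p : ℝ) (hp : 1 ≤ p) (Ω : Set (EucN N)) : ℝ≥0∞ :=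
  sInf {t | ∃ w ∈ W10 N p hp Ω, (∫ x, |w.1 x| ^ p) = 1 ∧
    t = ENNReal.ofReal (∫ x, ‖w.2 x‖ ^ p)}

/-- The `L^p` Poincaré constant "at infinity" `E_p(Ω)`. -/
def Einfty (N : ℕ) (p : ℝ) (hp : 1 ≤ p) (Ω : Set (EucN N)) : ℝ≥0∞ :=
  ⨆ R ∈ Set.Ioi (0 : ℝ), lambda1p N p hp (Ω \ closure (ball (0 : EucN N) R))

/-- There is a continuous odd map from `A` to the unit sphere `S^{j-1} ⊆ ℝ^j`. -/
def HasOddMapToSphere {Z : Type*} [NormedAddCommGroup Z] (A : Set Z) (j : ℕ) : Prop :=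
  ∃ f : Z → EuclideanSpace ℝ (Fin j),
    ContinuousOn f A ∧ (∀ x ∈ A, ‖f x‖ = 1) ∧ ∀ x ∈ A, f (-x) = -f x

/-- The Krasnosel'skii genus of `A` is at least `k`. -/
def genusGE {Z : Type*} [NormedAddCommGroup Z] (A : Set Z) (k : ℕ) : Prop :=
  ∀ j : ℕ, HasOddMapToSphere A j → k ≤ j

/-- The Krasnosel'skii genus of `A`, valued in `ℕ∞`. -/
def genus {Z : Type*} [NormedAddCommGroup Z] (A : Set Z) : ℕ∞ :=
  sInf {k : ℕ∞ | ∃ j : ℕ, (j : ℕ∞) = k ∧ HasOddMapToSphere A j}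

/-- The class `𝒲_{k,p}(Ω)` of compact symmetric subsets of `S_p(Ω) ∩ W^{1,p}_0(Ω)` with
genus at least `k`. -/
def SobClass (N : ℕ) (p : ℝ) (hp : 1 ≤ p) (Ω : Set (EucN N)) (k : ℕ) :
    Set (Set (SobPair N (ENNReal.ofReal p))) :=
  letI := fact_one_le_ofReal hp
  {K | K ⊆ W10 N p hp Ω ∧ (∀ w ∈ K, (∫ x, |w.1 x| ^ p) = 1) ∧
       (∀ w ∈ K, -w ∈ K) ∧ IsCompact K ∧ genusGE K k}

/-- The `k`-th minmax Ljusternik–Schnirelmann value `λ_{k,p}^{LS}(Ω)`. -/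
def lambdaLS (N : ℕ) (p : ℝ) (hp : 1 ≤ p) (Ω : Set (EucN N)) (k : ℕ) : ℝ≥0∞ :=
  ⨅ K ∈ SobClass N p hp Ω k, ⨆ w ∈ K, ENNReal.ofReal (∫ x, ‖w.2 x‖ ^ p)

/-- `w = (u, ∇u)` is an eigenfunction of the Dirichlet `p`-Laplacian on `Ω` associated to the
eigenvalue `lam`. -/
def IsEigenfunction (N : ℕ) (p : ℝ) (hp : 1 ≤ p) (Ω : Set (EucN N)) (lam : ℝ)
    (w : SobPair N (ENNReal.ofReal p)) : Prop :=
  w ∈ W10 N p hp Ω ∧ w ≠ 0 ∧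
  ∀ φ : EucN N → ℝ, IsTestFun Ω φ →
    (∫ x, ‖w.2 x‖ ^ (p - 2) * ⟪w.2 x, gradient φ x⟫) =
      lam * ∫ x, |w.1 x| ^ (p - 2) * (w.1 x) * φ x

/-- `lam` is an eigenvalue of the Dirichlet `p`-Laplacian on `Ω`. -/
def IsEigenvalue (N : ℕ) (p : ℝ) (hp : 1 ≤ p) (Ω : Set (EucN N)) (lam : ℝ) : Prop :=
  ∃ w, IsEigenfunction N p hp Ω lam w

/-- `v = (v, ∇v)` is a non-negative weak subsolution of `-Δ_p u = lam · u^{p-1}` in `Ω`. -/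
def IsSubsolution (N : ℕ) (p : ℝ) (hp : 1 ≤ p) (Ω : Set (EucN N)) (lam : ℝ)
    (v : SobPair N (ENNReal.ofReal p)) : Prop :=
  v ∈ W10 N p hp Ω ∧ (∀ᵐ x, 0 ≤ v.1 x) ∧
  ∀ φ ∈ W10 N p hp Ω, (∀ᵐ x, 0 ≤ φ.1 x) →
    (∫ x, ‖v.2 x‖ ^ (p - 2) * ⟪v.2 x, φ.2 x⟫) ≤ lam * ∫ x, (v.1 x) ^ (p - 1) * φ.1 x

/-- A strongly confining potential. -/
def StronglyConfining (N : ℕ) (V : EucN N → ℝ) : Prop :=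
  LocallyIntegrable V volume ∧ (∀ᵐ x, 0 ≤ V x) ∧
  ∃ α : ℝ → ℝ, (∀ R > (0 : ℝ), 0 < α R) ∧ MonotoneOn α (Set.Ioi 0) ∧
    Tendsto α atTop atTop ∧
    ∀ R > (0 : ℝ), ∀ᵐ x, x ∉ ball (0 : EucN N) R → α R ≤ V x

/-- Triples `(u, g, h)` in `L^q × L^q × L^q`; `h` plays the role of `V^{1/p} u` in the weighted
Sobolev space. -/
abbrev SobTriple (N : ℕ) (q : ℝ≥0∞) :=
  Lp ℝ q (volume : Measure (EucN N)) × Lp (EucN N) q (volume : Measure (EucN N)) ×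
    Lp ℝ q (volume : Measure (EucN N))

/-- A triple given (a.e.) by a test function, its gradient, and `V^{1/p}` times it. -/
def IsTestTriple {N : ℕ} (q : ℝ≥0∞) (p : ℝ) (Ω : Set (EucN N)) (V : EucN N → ℝ)
    (w : SobTriple N q) : Prop :=
  ∃ ψ : EucN N → ℝ, IsTestFun Ω ψ ∧ (⇑w.1 =ᵐ[volume] ψ) ∧
    (⇑w.2.1 =ᵐ[volume] fun x => gradient ψ x) ∧
    (⇑w.2.2 =ᵐ[volume] fun x => (V x) ^ (1/p) * ψ x)

/-- The weighted Sobolev space `W^{1,p}_0(Ω; V)`, realized as a closure of triples coming from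
test functions; the norm topology of `L^p × L^p × L^p` on such triples corresponds exactly to
the weighted Sobolev norm `(∫|∇u|^p + ∫(1+V)|u|^p)^{1/p}`. -/
def W10V (N : ℕ) (p : ℝ) (hp : 1 ≤ p) (Ω : Set (EucN N)) (V : EucN N → ℝ) :
    Set (SobTriple N (ENNReal.ofReal p)) :=
  letI := fact_one_le_ofReal hp
  closure {w | IsTestTriple (ENNReal.ofReal p) p Ω V w}

/-- The class `𝒲_{k,p}(Ω; V)` for the weighted space. -/
def SobClassV (N : ℕ) (p : ℝ) (hp : 1 ≤ p) (Ω : Set (EucN N)) (V : EucN N → ℝ) (k : ℕ) :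
    Set (Set (SobTriple N (ENNReal.ofReal p))) :=
  letI := fact_one_le_ofReal hp
  {K | K ⊆ W10V N p hp Ω V ∧ (∀ w ∈ K, (∫ x, |w.1 x| ^ p) = 1) ∧
       (∀ w ∈ K, -w ∈ K) ∧ IsCompact K ∧ genusGE K k}

/-- The perturbed minmax value `λ_{k,p}^{LS}(Ω; ε V)`, for the functional
`G(φ) = ∫|∇φ|^p + ε ∫ V |φ|^p`. -/
def lambdaLSV (N : ℕ) (p : ℝ) (hp : 1 ≤ p) (Ω : Set (EucN N)) (V : EucN N → ℝ)
    (ε : ℝ) (k : ℕ) : ℝ≥0∞ :=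
  ⨅ K ∈ SobClassV N p hp Ω V k, ⨆ w ∈ K,
    ENNReal.ofReal ((∫ x, ‖w.2.1 x‖ ^ p) + ε * ∫ x, |w.2.2 x| ^ p)

/-- `w` is a constrained critical point, at level `lam`, of the perturbed functional
`G(φ) = ∫|∇φ|^p + ε ∫ V |φ|^p` on the unit sphere of `L^p`. -/
def IsCriticalV (N : ℕ) (p : ℝ) (hp : 1 ≤ p) (Ω : Set (EucN N)) (V : EucN N → ℝ)
    (ε : ℝ) (lam : ℝ) (w : SobTriple N (ENNReal.ofReal p)) : Prop :=
  w ∈ W10V N p hp Ω V ∧ (∫ x, |w.1 x| ^ p) = 1 ∧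
  ∀ φ : EucN N → ℝ, IsTestFun Ω φ →
    (∫ x, ‖w.2.1 x‖ ^ (p - 2) * ⟪w.2.1 x, gradient φ x⟫)
      + ε * ∫ x, V x * |w.1 x| ^ (p - 2) * (w.1 x) * φ x
    = lam * ∫ x, |w.1 x| ^ (p - 2) * (w.1 x) * φ x

/-- The embedding `W^{1,p}_0(Ω) ↪ L^p(Ω)` is compact: every bounded sequence in `W^{1,p}_0(Ω)`
has a subsequence converging strongly in `L^p`. -/
def CompactSobolevEmbedding (N : ℕ) (p : ℝ) (hp : 1 ≤ p) (Ω : Set (EucN N)) : Prop :=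
  ∀ w : ℕ → SobPair N (ENNReal.ofReal p), (∀ n, w n ∈ W10 N p hp Ω) →
    (∃ M : ℝ≥0∞, M ≠ ⊤ ∧ ∀ n, eLpNorm (⇑(w n).1) (ENNReal.ofReal p) volume ≤ M ∧
        eLpNorm (⇑(w n).2) (ENNReal.ofReal p) volume ≤ M) →
    ∃ σ : ℕ → ℕ, StrictMono σ ∧ ∃ u : EucN N → ℝ, MemLp u (ENNReal.ofReal p) volume ∧
      Tendsto (fun n => eLpNorm (⇑(w (σ n)).1 - u) (ENNReal.ofReal p) volume) atTop (𝓝 0)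



section part1

variable {N : ℕ} {p : ℝ}

lemma ofReal_p_ne_zero (hp : 1 < p) : ENNReal.ofReal p ≠ 0 := by
  simp; linarith

lemma dc_lemma {E : Type*} [NormedAddCommGroup E] (hp : 1 < p) (f : ℕ → EucN N → E)
    (G : EucN N → ℝ) (hf : ∀ n, AEStronglyMeasurable (f n) volume)
    (hG : MemLp G (ENNReal.ofReal p) volume)
    (hb : ∀ n, ∀ᵐ x, ‖f n x‖ ≤ ‖G x‖)
    (ht : ∀ᵐ x, Tendsto (fun n => f n x) atTop (𝓝 0)) :
    Tendsto (fun n => eLpNorm (f n) (ENNReal.ofReal p) volume) atTop (𝓝 0) := by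
  have hp0 : 0 < p := by linarith
  have hr : (ENNReal.ofReal p).toReal = p := ENNReal.toReal_ofReal hp0.le
  have key : Tendsto (fun n => ∫⁻ x, ‖f n x‖ₑ ^ p) atTop (𝓝 (∫⁻ _ : EucN N, 0)) := by
    refine tendsto_lintegral_of_dominated_convergence' (fun x => ‖G x‖ₑ ^ p) ?_ ?_ ?_ ?_
    · intro n; exact (hf n).enorm.pow_const p
    · intro n
      filter_upwards [hb n] with x hx
      gcongr
      exact enorm_le_iff_norm_le.mpr hx
    · have := (eLpNorm_lt_top_iff_lintegral_rpow_enorm_lt_top (ofReal_p_ne_zero hp)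
        ENNReal.ofReal_ne_top).1 hG.2
      rw [hr] at this
      exact this.ne
    · filter_upwards [ht] with x hx
      have h1 : Tendsto (fun n => ‖f n x‖ₑ) atTop (𝓝 0) := by
        have := hx.enorm
        simpa using this
      have h2 := (ENNReal.continuous_rpow_const (y := p)).tendsto (0 : ℝ≥0∞)
      have h3 := h2.comp h1
      simpa [ENNReal.zero_rpow_of_pos hp0, Function.comp_def] using h3
  have e : ∀ n, eLpNorm (f n) (ENNReal.ofReal p) volume = (∫⁻ x, ‖f n x‖ₑ ^ p) ^ (1 / p) := by
    intro n
    rw [eLpNorm_eq_lintegral_rpow_enorm_toReal (ofReal_p_ne_zero hp) ENNReal.ofReal_ne_top, hr]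
  simp_rw [e]
  have h2 := (ENNReal.continuous_rpow_const (y := 1 / p)).tendsto (∫⁻ _ : EucN N, (0 : ℝ≥0∞))
  have h3 := h2.comp key
  simpa [ENNReal.zero_rpow_of_pos (inv_pos.2 hp0), Function.comp_def] using h3

/-- `(u, g)` belongs to `W^{1,p}_0(Ω; V)`, at the level of functions. -/
structure Appr (p : ℝ) (Ω : Set (EucN N)) (V : EucN N → ℝ) (u : EucN N → ℝ)
    (g : EucN N → EucN N) : Prop where
  mu : MemLp u (ENNReal.ofReal p) volume
  mg : MemLp g (ENNReal.ofReal p) volume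
  mh : MemLp (fun x => V x ^ (1 / p) * u x) (ENNReal.ofReal p) volume
  ap : ∀ e : ℝ≥0∞, e ≠ 0 → ∃ ψ, IsTestFun Ω ψ ∧
    eLpNorm (fun x => ψ x - u x) (ENNReal.ofReal p) volume ≤ e ∧
    eLpNorm (fun x => gradient ψ x - g x) (ENNReal.ofReal p) volume ≤ e ∧
    eLpNorm (fun x => V x ^ (1 / p) * (ψ x - u x)) (ENNReal.ofReal p) volume ≤ e

lemma contDiff_gradient {ψ : EucN N → ℝ} (h : ContDiff ℝ (⊤ : ℕ∞) ψ) :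
    Continuous (fun x => gradient ψ x) := by
  have h1 : Continuous (fderiv ℝ ψ) := h.continuous_fderiv (by simp)
  exact ((InnerProductSpace.toDual ℝ (EucN N)).symm.continuous).comp h1

lemma IsTestFun.memLp {Ω : Set (EucN N)} {ψ : EucN N → ℝ} (h : IsTestFun Ω ψ) (q : ℝ≥0∞) :
    MemLp ψ q volume :=
  h.1.continuous.memLp_of_hasCompactSupport h.2.1

lemma IsTestFun.memLp_grad {Ω : Set (EucN N)} {ψ : EucN N → ℝ} (h : IsTestFun Ω ψ) (q : ℝ≥0∞) :
    MemLp (fun x => gradient ψ x) q volume := by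
  refine (contDiff_gradient h.1).memLp_of_hasCompactSupport ?_
  have h2 : HasCompactSupport (fderiv ℝ ψ) := h.2.1.fderiv ℝ
  exact h2.comp_left (g := (InnerProductSpace.toDual ℝ (EucN N)).symm) (map_zero _)

lemma memLp_Vpow {V : EucN N → ℝ} (hp : 1 < p) (hV : LocallyIntegrable V volume)
    {Ω : Set (EucN N)} (hV0 : ∀ᵐ x, 0 ≤ V x) {ψ : EucN N → ℝ} (h : IsTestFun Ω ψ) :
    MemLp (fun x => V x ^ (1 / p) * ψ x) (ENNReal.ofReal p) volume := by
  have hp0 : 0 < p := by linarith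
  have hVm : AEStronglyMeasurable V volume := hV.aestronglyMeasurable
  have hm : AEStronglyMeasurable (fun x => V x ^ (1 / p) * ψ x) volume := by
    refine AEStronglyMeasurable.mul ?_ h.1.continuous.aestronglyMeasurable
    exact (hVm.aemeasurable.pow_const _).aestronglyMeasurable
  rw [← integrable_norm_rpow_iff hm (ofReal_p_ne_zero hp) ENNReal.ofReal_ne_top,
    ENNReal.toReal_ofReal hp0.le]
  have h3 : Integrable (fun x => |ψ x| ^ p • V x) volume := by
    refine hV.integrable_smul_left_of_hasCompactSupport ?_ ?_
    · exact (h.1.continuous.abs).rpow_const (fun x => Or.inr hp0.le)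
    · refine h.2.1.comp_left (g := fun t => |t| ^ p) ?_
      simp [Real.zero_rpow hp0.ne']
  refine h3.congr ?_
  filter_upwards [hV0] with x hx
  rw [norm_mul, Real.mul_rpow (norm_nonneg _) (norm_nonneg _), Real.norm_of_nonneg
    (Real.rpow_nonneg hx _), ← Real.rpow_mul hx, one_div, inv_mul_cancel₀ hp0.ne', Real.rpow_one,
    Real.norm_eq_abs, smul_eq_mul, mul_comm]

lemma Appr.of_test {V : EucN N → ℝ} (hp : 1 < p) (hV : LocallyIntegrable V volume)
    {Ω : Set (EucN N)} (hV0 : ∀ᵐ x, 0 ≤ V x) {ψ : EucN N → ℝ} (h : IsTestFun Ω ψ) :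
    Appr p Ω V ψ (fun x => gradient ψ x) where
  mu := h.memLp _
  mg := h.memLp_grad _
  mh := memLp_Vpow hp hV hV0 h
  ap := fun e he => ⟨ψ, h, by simp, by simp, by simp⟩

lemma ofReal_one_le (hp : 1 < p) : 1 ≤ ENNReal.ofReal p := ENNReal.one_le_ofReal.mpr hp.le

lemma Appr.lim {V : EucN N → ℝ} (hp : 1 < p) (hVm : AEStronglyMeasurable V volume)
    {Ω : Set (EucN N)} {un : ℕ → EucN N → ℝ} {gn : ℕ → EucN N → EucN N}
    {u : EucN N → ℝ} {g : EucN N → EucN N}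
    (hn : ∀ n, Appr p Ω V (un n) (gn n))
    (mu : MemLp u (ENNReal.ofReal p) volume) (mg : MemLp g (ENNReal.ofReal p) volume)
    (mh : MemLp (fun x => V x ^ (1 / p) * u x) (ENNReal.ofReal p) volume)
    (h1 : Tendsto (fun n => eLpNorm (fun x => un n x - u x) (ENNReal.ofReal p) volume)
      atTop (𝓝 0))
    (h2 : Tendsto (fun n => eLpNorm (fun x => gn n x - g x) (ENNReal.ofReal p) volume)
      atTop (𝓝 0))
    (h3 : Tendsto (fun n => eLpNorm (fun x => V x ^ (1 / p) * (un n x - u x))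
      (ENNReal.ofReal p) volume) atTop (𝓝 0)) : Appr p Ω V u g := by
  refine ⟨mu, mg, mh, fun e he => ?_⟩
  have he2 : (0 : ℝ≥0∞) < e / 2 := by
    exact ENNReal.half_pos he
  have := ((h1.eventually_le_const he2).and
    ((h2.eventually_le_const he2).and (h3.eventually_le_const he2))).exists
  obtain ⟨n, a1, a2, a3⟩ := this
  obtain ⟨ψ, hψ, b1, b2, b3⟩ := (hn n).ap (e / 2) he2.ne'
  have hψm : AEStronglyMeasurable ψ volume := hψ.1.continuous.aestronglyMeasurable
  have hψg : AEStronglyMeasurable (fun x => gradient ψ x) volume :=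
    (contDiff_gradient hψ.1).aestronglyMeasurable
  have hVp : AEStronglyMeasurable (fun x => V x ^ (1 / p)) volume :=
    (hVm.aemeasurable.pow_const _).aestronglyMeasurable
  refine ⟨ψ, hψ, ?_, ?_, ?_⟩
  · have : (fun x => ψ x - u x) = (fun x => ψ x - un n x) + (fun x => un n x - u x) := by
      ext x; simp
    rw [this]
    refine (eLpNorm_add_le (hψm.sub (hn n).mu.1) ((hn n).mu.1.sub mu.1) (ofReal_one_le hp)).trans ?_
    calc _ ≤ e / 2 + e / 2 := add_le_add b1 a1
      _ = e := ENNReal.add_halves e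
  · have : (fun x => gradient ψ x - g x) = (fun x => gradient ψ x - gn n x) +
      (fun x => gn n x - g x) := by
      ext x; simp
    rw [this]
    refine (eLpNorm_add_le (hψg.sub (hn n).mg.1) ((hn n).mg.1.sub mg.1) (ofReal_one_le hp)).trans ?_
    calc _ ≤ e / 2 + e / 2 := add_le_add b2 a2
      _ = e := ENNReal.add_halves e
  · have : (fun x => V x ^ (1 / p) * (ψ x - u x)) = (fun x => V x ^ (1 / p) * (ψ x - un n x)) +
      (fun x => V x ^ (1 / p) * (un n x - u x)) := by
      ext x; simp only [Pi.add_apply]; ring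
    rw [this]
    refine (eLpNorm_add_le (hVp.mul (hψm.sub (hn n).mu.1)) (hVp.mul ((hn n).mu.1.sub mu.1))
      (ofReal_one_le hp)).trans ?_
    calc _ ≤ e / 2 + e / 2 := add_le_add b3 a3
      _ = e := ENNReal.add_halves e

/-- A sequence of test functions converging to `u`, also almost everywhere. -/
lemma Appr.seq {V : EucN N → ℝ} (hp : 1 < p)
    {Ω : Set (EucN N)} {u : EucN N → ℝ} {g : EucN N → EucN N} (h : Appr p Ω V u g) :
    ∃ ψ : ℕ → EucN N → ℝ, (∀ n, IsTestFun Ω (ψ n)) ∧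
      Tendsto (fun n => eLpNorm (fun x => ψ n x - u x) (ENNReal.ofReal p) volume) atTop (𝓝 0) ∧
      Tendsto (fun n => eLpNorm (fun x => gradient (ψ n) x - g x) (ENNReal.ofReal p) volume)
        atTop (𝓝 0) ∧
      Tendsto (fun n => eLpNorm (fun x => V x ^ (1 / p) * (ψ n x - u x)) (ENNReal.ofReal p) volume)
        atTop (𝓝 0) ∧
      ∀ᵐ x, Tendsto (fun n => ψ n x) atTop (𝓝 (u x)) := by
  have hpos : ∀ n : ℕ, ((n : ℝ≥0∞) + 1)⁻¹ ≠ 0 := by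
    intro n; simp
  choose ψ hψ h1 h2 h3 using fun n : ℕ => h.ap (((n : ℝ≥0∞) + 1)⁻¹) (hpos n)
  have hlim : Tendsto (fun n : ℕ => ((n : ℝ≥0∞) + 1)⁻¹) atTop (𝓝 0) := by
    have := (tendsto_add_atTop_iff_nat (f := fun n : ℕ => (n : ℝ≥0∞)⁻¹) 1).2
      ENNReal.tendsto_inv_nat_nhds_zero
    simpa using this
  have t1 := tendsto_of_tendsto_of_tendsto_of_le_of_le tendsto_const_nhds hlim
    (fun n => zero_le) h1
  have t2 := tendsto_of_tendsto_of_tendsto_of_le_of_le tendsto_const_nhds hlim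
    (fun n => zero_le) h2
  have t3 := tendsto_of_tendsto_of_tendsto_of_le_of_le tendsto_const_nhds hlim
    (fun n => zero_le) h3
  have hm := tendstoInMeasure_of_tendsto_eLpNorm (f := ψ) (g := u) (μ := volume)
    (ofReal_p_ne_zero hp) (fun n => (hψ n).1.continuous.aestronglyMeasurable) h.mu.1 t1
  obtain ⟨σ, hσ, hae⟩ := hm.exists_seq_tendsto_ae
  have hσ' := hσ.tendsto_atTop
  exact ⟨fun n => ψ (σ n), fun n => hψ _, t1.comp hσ', t2.comp hσ', t3.comp hσ', hae⟩

end part1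


section part2

variable {N : ℕ} {p : ℝ}

lemma gradient_comp_mul {F D : ℝ → ℝ} (hF : ∀ t, HasDerivAt F (D t) t) {ψ η : EucN N → ℝ}
    (hψ : ContDiff ℝ (⊤ : ℕ∞) ψ) (hη : ContDiff ℝ (⊤ : ℕ∞) η) (x : EucN N) :
    gradient (fun y => F (ψ y) * η y) x =
      (D (ψ x) * η x) • gradient ψ x + F (ψ x) • gradient η x := by
  have h1 : HasFDerivAt ψ (fderiv ℝ ψ x) x := (hψ.differentiable (by simp) x).hasFDerivAt
  have h2 : HasFDerivAt η (fderiv ℝ η x) x := (hη.differentiable (by simp) x).hasFDerivAt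
  have h3 := ((hF (ψ x)).comp_hasFDerivAt x h1).mul h2
  have h4 : fderiv ℝ (fun y => F (ψ y) * η y) x = _ := h3.fderiv
  unfold gradient
  rw [h4]
  simp only [map_add, map_smul, Function.comp]
  rw [smul_smul, mul_comm (η x), add_comm]

lemma IsTestFun.comp_mul {F : ℝ → ℝ} (hFs : ContDiff ℝ (⊤ : ℕ∞) F) (hF0 : F 0 = 0)
    {Ω Ω' : Set (EucN N)} {ψ η : EucN N → ℝ} (hψ : IsTestFun Ω ψ)
    (hη : ContDiff ℝ (⊤ : ℕ∞) η) (hsup : ∀ x ∈ Ω, x ∈ tsupport η → x ∈ Ω') :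
    IsTestFun Ω' (fun y => F (ψ y) * η y) := by
  refine ⟨(hFs.comp hψ.1).mul hη, ?_, ?_⟩
  · exact (hψ.2.1.comp_left (g := F) hF0).mul_right
  · intro x hx
    have a : x ∈ tsupport ψ := by
      refine closure_mono ?_ hx
      intro y hy
      simp only [Function.mem_support] at hy ⊢
      intro h; apply hy; simp [h, hF0]
    have b : x ∈ tsupport η := by
      refine closure_mono ?_ hx
      intro y hy
      simp only [Function.mem_support] at hy ⊢
      intro h; apply hy; simp [h]
    exact hsup x (hψ.2.2 a) b

lemma lip_of_deriv {F D : ℝ → ℝ} {C : ℝ} (hF : ∀ t, HasDerivAt F (D t) t)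
    (hD : ∀ t, |D t| ≤ C) (a b : ℝ) : |F a - F b| ≤ C * |a - b| := by
  have := Convex.norm_image_sub_le_of_norm_hasDerivWithin_le (s := Set.univ) (f := F) (f' := D)
    (C := C) (x := b) (y := a) (fun t _ => (hF t).hasDerivWithinAt) (fun t _ => hD t)
    convex_univ trivial trivial
  simpa using this

lemma tendsto_mul_zero {f : ℕ → ℝ≥0∞} (C : ℝ) (hf : Tendsto f atTop (𝓝 0)) :
    Tendsto (fun n => ENNReal.ofReal C * f n) atTop (𝓝 0) := by
  have := ENNReal.Tendsto.const_mul (a := ENNReal.ofReal C) hf (Or.inr ENNReal.ofReal_ne_top)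
  simpa using this

lemma Appr.comp_mul {V : EucN N → ℝ} (hp : 1 < p) (hV : LocallyIntegrable V volume)
    (hV0 : ∀ᵐ x, 0 ≤ V x) {Ω Ω' : Set (EucN N)} {u : EucN N → ℝ} {g : EucN N → EucN N}
    (h : Appr p Ω V u g)
    {F D : ℝ → ℝ} {C B : ℝ} (hFs : ContDiff ℝ (⊤ : ℕ∞) F) (hF0 : F 0 = 0)
    (hF : ∀ t, HasDerivAt F (D t) t) (hDc : Continuous D) (hD : ∀ t, |D t| ≤ C)
    {η : EucN N → ℝ} (hη : ContDiff ℝ (⊤ : ℕ∞) η) (hηB : ∀ x, |η x| ≤ B)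
    (hηG : ∀ x, ‖gradient η x‖ ≤ B) (hsup : ∀ x ∈ Ω, x ∈ tsupport η → x ∈ Ω') :
    Appr p Ω' V (fun x => F (u x) * η x)
      (fun x => (D (u x) * η x) • g x + F (u x) • gradient η x) := by
  have hC : 0 ≤ C := (abs_nonneg _).trans (hD 0)
  have hB : 0 ≤ B := (abs_nonneg _).trans (hηB 0)
  have hlip := lip_of_deriv hF hD
  have hFu : ∀ t, |F t| ≤ C * |t| := by intro t; simpa [hF0] using hlip t 0
  have hVm : AEStronglyMeasurable V volume := hV.aestronglyMeasurable
  have hVp : AEStronglyMeasurable (fun x => V x ^ (1 / p)) volume :=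
    (hVm.aemeasurable.pow_const _).aestronglyMeasurable
  have hFm : ∀ v : EucN N → ℝ, AEStronglyMeasurable v volume →
      AEStronglyMeasurable (fun x => F (v x)) volume := fun v hv =>
    hFs.continuous.comp_aestronglyMeasurable hv
  have hDm : ∀ v : EucN N → ℝ, AEStronglyMeasurable v volume →
      AEStronglyMeasurable (fun x => D (v x)) volume := fun v hv =>
    hDc.comp_aestronglyMeasurable hv
  have hηm : AEStronglyMeasurable η volume := hη.continuous.aestronglyMeasurable
  have hηg : AEStronglyMeasurable (fun x => gradient η x) volume :=
    (contDiff_gradient hη).aestronglyMeasurable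
  obtain ⟨ψ, hψ, t1, t2, t3, hae⟩ := h.seq hp
  have hψm : ∀ n, AEStronglyMeasurable (ψ n) volume :=
    fun n => (hψ n).1.continuous.aestronglyMeasurable
  have hψg : ∀ n, AEStronglyMeasurable (fun x => gradient (ψ n) x) volume :=
    fun n => (contDiff_gradient (hψ n).1).aestronglyMeasurable
  have mg1 : MemLp (fun x => (D (u x) * η x) • g x) (ENNReal.ofReal p) volume := by
    refine MemLp.of_le_mul (c := C * B) h.mg (((hDm u h.mu.1).mul hηm).smul h.mg.1) ?_
    filter_upwards with x
    rw [norm_smul, norm_mul]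
    gcongr
    · exact hD _
    · exact hηB _
  have mg2 : MemLp (fun x => F (u x) • gradient η x) (ENNReal.ofReal p) volume := by
    refine MemLp.of_le_mul (c := C * B) h.mu ((hFm u h.mu.1).smul hηg) ?_
    filter_upwards with x
    rw [norm_smul]
    calc |F (u x)| * ‖gradient η x‖ ≤ (C * |u x|) * B := by
          gcongr
          · exact hFu _
          · exact hηG _
      _ = C * B * ‖u x‖ := by rw [Real.norm_eq_abs]; ring
  refine Appr.lim (un := fun n x => F (ψ n x) * η x)
    (gn := fun n x => gradient (fun y => F (ψ n y) * η y) x) hp hVm (fun n =>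
    Appr.of_test hp hV hV0 ((hψ n).comp_mul hFs hF0 hη hsup)) ?_ (mg1.add mg2) ?_ ?_ ?_ ?_
  · refine MemLp.of_le_mul (c := C * B) h.mu ((hFm u h.mu.1).mul hηm) ?_
    filter_upwards with x
    rw [norm_mul]
    calc |F (u x)| * |η x| ≤ (C * |u x|) * B := by
          gcongr
          · exact hFu _
          · exact hηB _
      _ = C * B * ‖u x‖ := by rw [Real.norm_eq_abs]; ring
  · refine MemLp.of_le_mul (c := C * B) h.mh (hVp.mul ((hFm u h.mu.1).mul hηm)) ?_
    filter_upwards with x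
    rw [norm_mul, norm_mul, norm_mul]
    calc ‖V x ^ (1 / p)‖ * (|F (u x)| * |η x|) ≤ ‖V x ^ (1 / p)‖ * ((C * |u x|) * B) := by
          gcongr
          · exact hFu _
          · exact hηB _
      _ = C * B * (‖V x ^ (1 / p)‖ * ‖u x‖) := by rw [Real.norm_eq_abs (u x)]; ring
  · refine tendsto_of_tendsto_of_tendsto_of_le_of_le tendsto_const_nhds
      (tendsto_mul_zero (C * B) t1) (fun n => zero_le) (fun n => ?_)
    refine eLpNorm_le_mul_eLpNorm_of_ae_le_mul ?_ _
    filter_upwards with x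
    rw [← sub_mul, norm_mul]
    calc |F (ψ n x) - F (u x)| * |η x| ≤ (C * |ψ n x - u x|) * B := by
          gcongr
          · exact hlip _ _
          · exact hηB _
      _ = C * B * ‖ψ n x - u x‖ := by rw [Real.norm_eq_abs]; ring
  · -- gradients
    have s2 : Tendsto (fun n => eLpNorm (fun x => ((D (ψ n x) - D (u x)) * η x) • g x)
        (ENNReal.ofReal p) volume) atTop (𝓝 0) := by
      refine dc_lemma hp _ (fun x => (2 * C * B) * ‖g x‖) ?_ (h.mg.norm.const_mul _) ?_ ?_
      · intro n
        exact (((hDm _ (hψm n)).sub (hDm u h.mu.1)).mul hηm).smul h.mg.1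
      · intro n
        filter_upwards with x
        rw [norm_smul, norm_mul, norm_mul, norm_norm, Real.norm_of_nonneg
          (by positivity : 0 ≤ 2 * C * B)]
        have i1 : ‖D (ψ n x) - D (u x)‖ ≤ 2 * C := by
          refine (norm_sub_le _ _).trans ?_
          have := hD (ψ n x); have := hD (u x)
          simp only [Real.norm_eq_abs]
          linarith
        have i2 : ‖η x‖ ≤ B := hηB x
        gcongr
      · filter_upwards [hae] with x hx
        have a1 : Tendsto (fun n => D (ψ n x)) atTop (𝓝 (D (u x))) :=
          (hDc.tendsto _).comp hx
        have a2 := ((a1.sub_const (D (u x))).mul_const (η x)).smul_const (g x)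
        simpa using a2
    have tot : Tendsto (fun n =>
        ENNReal.ofReal (C * B) * eLpNorm (fun x => gradient (ψ n) x - g x) (ENNReal.ofReal p) volume
        + eLpNorm (fun x => ((D (ψ n x) - D (u x)) * η x) • g x) (ENNReal.ofReal p) volume
        + ENNReal.ofReal (C * B) * eLpNorm (fun x => ψ n x - u x) (ENNReal.ofReal p) volume)
        atTop (𝓝 0) := by
      have := ((tendsto_mul_zero (C * B) t2).add s2).add (tendsto_mul_zero (C * B) t1)
      simpa using this
    refine tendsto_of_tendsto_of_tendsto_of_le_of_le tendsto_const_nhds tot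
      (fun n => zero_le) (fun n => ?_)
    have e : (fun x => gradient (fun y => F (ψ n y) * η y) x -
        ((D (u x) * η x) • g x + F (u x) • gradient η x)) =
        ((fun x => (D (ψ n x) * η x) • (gradient (ψ n) x - g x)) +
        (fun x => ((D (ψ n x) - D (u x)) * η x) • g x)) +
        (fun x => (F (ψ n x) - F (u x)) • gradient η x) := by
      ext1 x
      rw [gradient_comp_mul hF (hψ n).1 hη]
      simp only [Pi.add_apply]
      module
    have m1 : AEStronglyMeasurable (fun x => (D (ψ n x) * η x) • (gradient (ψ n) x - g x)) volume :=
      ((hDm _ (hψm n)).mul hηm).smul ((hψg n).sub h.mg.1)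
    have m2 : AEStronglyMeasurable (fun x => ((D (ψ n x) - D (u x)) * η x) • g x) volume :=
      (((hDm _ (hψm n)).sub (hDm u h.mu.1)).mul hηm).smul h.mg.1
    have m3 : AEStronglyMeasurable (fun x => (F (ψ n x) - F (u x)) • gradient η x) volume :=
      ((hFm _ (hψm n)).sub (hFm u h.mu.1)).smul hηg
    rw [e]
    refine (eLpNorm_add_le (m1.add m2) m3 (ofReal_one_le hp)).trans ?_
    refine add_le_add ((eLpNorm_add_le m1 m2 (ofReal_one_le hp)).trans
      (add_le_add ?_ le_rfl)) ?_
    · refine eLpNorm_le_mul_eLpNorm_of_ae_le_mul ?_ _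
      filter_upwards with x
      rw [norm_smul, norm_mul]
      gcongr
      · exact hD _
      · exact hηB _
    · refine eLpNorm_le_mul_eLpNorm_of_ae_le_mul ?_ _
      filter_upwards with x
      rw [norm_smul]
      calc |F (ψ n x) - F (u x)| * ‖gradient η x‖ ≤ (C * |ψ n x - u x|) * B := by
            gcongr
            · exact hlip _ _
            · exact hηG _
        _ = C * B * ‖ψ n x - u x‖ := by rw [Real.norm_eq_abs]; ring
  · refine tendsto_of_tendsto_of_tendsto_of_le_of_le tendsto_const_nhds
      (tendsto_mul_zero (C * B) t3) (fun n => zero_le) (fun n => ?_)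
    refine eLpNorm_le_mul_eLpNorm_of_ae_le_mul ?_ _
    filter_upwards with x
    rw [← sub_mul, norm_mul, norm_mul, norm_mul]
    calc ‖V x ^ (1 / p)‖ * (|F (ψ n x) - F (u x)| * |η x|)
          ≤ ‖V x ^ (1 / p)‖ * ((C * |ψ n x - u x|) * B) := by
          gcongr
          · exact hlip _ _
          · exact hηB _
      _ = C * B * (‖V x ^ (1 / p)‖ * ‖ψ n x - u x‖) := by rw [Real.norm_eq_abs (ψ n x - u x)]; ring

end part2


section part3

variable {N : ℕ} {p : ℝ}

/-- Soft thresholding at level `k`. -/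
def sF (k t : ℝ) : ℝ := t + (|t - k| - |t + k|) / 2

/-- A (generalised) derivative of `sF k`. -/
def sD (k t : ℝ) : ℝ := 1 + (Real.sign (t - k) - Real.sign (t + k)) / 2

/-- Smooth approximation of `sF k`. -/
def sFn (k d t : ℝ) : ℝ := t + (√((t - k) ^ 2 + d) - √((t + k) ^ 2 + d)) / 2

/-- Derivative of `sFn k d`. -/
def sDn (k d t : ℝ) : ℝ := 1 + ((t - k) / √((t - k) ^ 2 + d) - (t + k) / √((t + k) ^ 2 + d)) / 2

lemma abs_sF {k : ℝ} (hk : 0 ≤ k) (t : ℝ) : |sF k t| = max (|t| - k) 0 := by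
  unfold sF
  rcases le_total t 0 with ht | ht
  · rw [abs_of_nonpos ht, abs_of_nonpos (by linarith : t - k ≤ 0)]
    rcases le_total (t + k) 0 with h | h
    · rw [abs_of_nonpos h, max_eq_left (by linarith), abs_of_nonpos (by linarith)]; ring
    · rw [abs_of_nonneg h, max_eq_right (by linarith)]
      ring_nf; simp
  · rw [abs_of_nonneg ht, abs_of_nonneg (by linarith : 0 ≤ t + k)]
    rcases le_total (t - k) 0 with h | h
    · rw [abs_of_nonpos h, max_eq_right (by linarith)]
      ring_nf; simp
    · rw [abs_of_nonneg h, max_eq_left (by linarith), abs_of_nonneg (by linarith)]; ring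

lemma mul_sF_nonneg {k : ℝ} (hk : 0 ≤ k) (t : ℝ) : 0 ≤ t * sF k t := by
  unfold sF
  rcases le_total t 0 with ht | ht
  · rw [abs_of_nonpos (by linarith : t - k ≤ 0)]
    rcases le_total (t + k) 0 with h | h
    · rw [abs_of_nonpos h]; nlinarith
    · rw [abs_of_nonneg h]; nlinarith
  · rw [abs_of_nonneg (by linarith : 0 ≤ t + k)]
    rcases le_total (t - k) 0 with h | h
    · rw [abs_of_nonpos h]; nlinarith
    · rw [abs_of_nonneg h]; nlinarith

lemma sD_nonneg (k t : ℝ) : 0 ≤ sD k t := by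
  unfold sD
  rcases Real.sign_apply_eq (t - k) with h | h | h <;>
  rcases Real.sign_apply_eq (t + k) with h' | h' | h' <;> rw [h, h'] <;> norm_num

lemma sD_le_one {k : ℝ} (hk : 0 ≤ k) (t : ℝ) : sD k t ≤ 1 := by
  unfold sD
  have : Real.sign (t - k) ≤ Real.sign (t + k) := by
    rcases lt_trichotomy (t - k) 0 with h | h | h
    · rw [Real.sign_of_neg h]
      rcases Real.sign_apply_eq (t + k) with h' | h' | h' <;> rw [h'] <;> norm_num
    · rw [h, Real.sign_zero]
      rcases eq_or_lt_of_le (by linarith : 0 ≤ t + k) with h1 | h1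
      · rw [← h1]; simp
      · rw [Real.sign_of_pos h1]; norm_num
    · rw [Real.sign_of_pos h, Real.sign_of_pos (by linarith)]
  linarith

lemma sD_eq_one {k : ℝ} (hk : 0 ≤ k) {t : ℝ} (h : sF k t ≠ 0) : sD k t = 1 := by
  have h1 : k < |t| := by
    by_contra hc
    apply h
    rw [← abs_eq_zero, abs_sF hk, max_eq_right (by linarith)]
  unfold sD
  rcases lt_abs.1 h1 with h2 | h2
  · rw [Real.sign_of_pos (by linarith), Real.sign_of_pos (by linarith)]; norm_num
  · rw [Real.sign_of_neg (by linarith), Real.sign_of_neg (by linarith)]; norm_num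

lemma contDiff_sFn (k : ℝ) {d : ℝ} (hd : 0 < d) : ContDiff ℝ (⊤ : ℕ∞) (sFn k d) := by
  unfold sFn
  refine contDiff_id.add ((ContDiff.sub ?_ ?_).div_const 2)
  · refine ContDiff.sqrt (by fun_prop) (fun t => ?_); positivity
  · refine ContDiff.sqrt (by fun_prop) (fun t => ?_); positivity

lemma hasDerivAt_sFn (k : ℝ) {d : ℝ} (hd : 0 < d) (t : ℝ) :
    HasDerivAt (sFn k d) (sDn k d t) t := by
  have aux : ∀ c : ℝ, HasDerivAt (fun t => √((t + c) ^ 2 + d)) ((t + c) / √((t + c) ^ 2 + d)) t := by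
    intro c
    have h1 : HasDerivAt (fun t => (t + c) ^ 2 + d) (2 * (t + c)) t := by
      have := (((hasDerivAt_id t).add_const c).pow 2).add_const d
      simpa using this
    have h2 := h1.sqrt (by positivity)
    convert h2 using 1
    rw [mul_div_mul_left _ _ (by norm_num)]
  have h1 := aux k
  have h2 := aux (-k)
  simp only [← sub_eq_add_neg] at h2
  exact (hasDerivAt_id t).add ((h2.sub h1).div_const 2)

lemma continuous_sDn (k : ℝ) {d : ℝ} (hd : 0 < d) : Continuous (sDn k d) := by
  unfold sDn
  refine continuous_const.add ((Continuous.sub ?_ ?_).div_const 2)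
  · refine Continuous.div (by fun_prop) (by fun_prop) (fun t => ?_)
    positivity
  · refine Continuous.div (by fun_prop) (by fun_prop) (fun t => ?_)
    positivity

lemma abs_sDn_le (k : ℝ) {d : ℝ} (hd : 0 < d) (t : ℝ) : |sDn k d t| ≤ 2 := by
  have aux : ∀ s : ℝ, |s / √(s ^ 2 + d)| ≤ 1 := by
    intro s
    rw [abs_div, abs_of_pos (by positivity : 0 < √(s ^ 2 + d)), div_le_one (by positivity)]
    rw [← Real.sqrt_sq_eq_abs]
    exact Real.sqrt_le_sqrt (by linarith)
  have h1 := abs_le.1 (aux (t - k))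
  have h2 := abs_le.1 (aux (t + k))
  unfold sDn
  rw [abs_le]
  constructor <;> linarith

lemma sFn_zero (k d : ℝ) : sFn k d 0 = 0 := by simp [sFn]

/-- The sequence `1 / (n + 1)`. -/
def dn (n : ℕ) : ℝ := 1 / ((n : ℝ) + 1)

lemma dn_pos (n : ℕ) : 0 < dn n := by unfold dn; positivity

lemma dn_tendsto : Tendsto dn atTop (𝓝 0) := tendsto_one_div_add_atTop_nhds_zero_nat

lemma sqrt_dn_tendsto (s : ℝ) : Tendsto (fun n => √(s ^ 2 + dn n)) atTop (𝓝 |s|) := by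
  have h1 : Tendsto (fun n => s ^ 2 + dn n) atTop (𝓝 (s ^ 2)) := by
    simpa using dn_tendsto.const_add (s ^ 2)
  have := h1.sqrt
  rwa [Real.sqrt_sq_eq_abs] at this

lemma sFn_tendsto (k t : ℝ) : Tendsto (fun n => sFn k (dn n) t) atTop (𝓝 (sF k t)) := by
  unfold sFn sF
  exact (((sqrt_dn_tendsto (t - k)).sub (sqrt_dn_tendsto (t + k))).div_const 2).const_add t

lemma sDn_tendsto (k t : ℝ) : Tendsto (fun n => sDn k (dn n) t) atTop (𝓝 (sD k t)) := by
  have aux : ∀ s : ℝ, Tendsto (fun n => s / √(s ^ 2 + dn n)) atTop (𝓝 (Real.sign s)) := by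
    intro s
    rcases eq_or_ne s 0 with rfl | hs
    · simp
    · have h1 := (tendsto_const_nhds (x := s)).div (sqrt_dn_tendsto s) (abs_ne_zero.2 hs)
      have h2 : Real.sign s = s / |s| := by
        rcases lt_or_gt_of_ne hs with h | h
        · rw [Real.sign_of_neg h, abs_of_neg h]; field_simp
        · rw [Real.sign_of_pos h, abs_of_pos h]; field_simp
      rw [h2]
      exact h1
  unfold sDn sD
  exact (((aux (t - k)).sub (aux (t + k))).div_const 2).const_add 1

lemma continuous_sF (k : ℝ) : Continuous (sF k) := by unfold sF; fun_prop

lemma Appr.soft {V : EucN N → ℝ} (hp : 1 < p) (hV : LocallyIntegrable V volume)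
    (hV0 : ∀ᵐ x, 0 ≤ V x) {Ω Ω' : Set (EucN N)} {u : EucN N → ℝ} {g : EucN N → EucN N}
    (h : Appr p Ω V u g) {k : ℝ} (hk : 0 ≤ k) {B : ℝ}
    {η : EucN N → ℝ} (hη : ContDiff ℝ (⊤ : ℕ∞) η) (hηB : ∀ x, |η x| ≤ B)
    (hηG : ∀ x, ‖gradient η x‖ ≤ B) (hsup : ∀ x ∈ Ω, x ∈ tsupport η → x ∈ Ω') :
    Appr p Ω' V (fun x => sF k (u x) * η x)
      (fun x => (sD k (u x) * η x) • g x + sF k (u x) • gradient η x) := by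
  have hB : 0 ≤ B := (abs_nonneg _).trans (hηB 0)
  have hVm : AEStronglyMeasurable V volume := hV.aestronglyMeasurable
  have hVp : AEStronglyMeasurable (fun x => V x ^ (1 / p)) volume :=
    (hVm.aemeasurable.pow_const _).aestronglyMeasurable
  have hηm : AEStronglyMeasurable η volume := hη.continuous.aestronglyMeasurable
  have hηg : AEStronglyMeasurable (fun x => gradient η x) volume :=
    (contDiff_gradient hη).aestronglyMeasurable
  have hsF : ∀ t, |sF k t| ≤ |t| := by
    intro t; rw [abs_sF hk]; exact max_le (by linarith) (abs_nonneg _)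
  have hsFn : ∀ n t, |sFn k (dn n) t| ≤ 2 * |t| := by
    intro n t
    simpa [sFn_zero] using lip_of_deriv (hasDerivAt_sFn k (dn_pos n)) (abs_sDn_le k (dn_pos n)) t 0
  have hdiff : ∀ n t, |sFn k (dn n) t - sF k t| ≤ 3 * |t| := by
    intro n t
    have := abs_sub (sFn k (dn n) t) (sF k t)
    have := hsF t; have := hsFn n t
    linarith
  have hFnm : ∀ n, AEStronglyMeasurable (fun x => sFn k (dn n) (u x)) volume := fun n =>
    (contDiff_sFn k (dn_pos n)).continuous.comp_aestronglyMeasurable h.mu.1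
  have hDnm : ∀ n, AEStronglyMeasurable (fun x => sDn k (dn n) (u x)) volume := fun n =>
    (continuous_sDn k (dn_pos n)).comp_aestronglyMeasurable h.mu.1
  have hFm : AEStronglyMeasurable (fun x => sF k (u x)) volume :=
    (continuous_sF k).comp_aestronglyMeasurable h.mu.1
  have hDm : AEStronglyMeasurable (fun x => sD k (u x)) volume :=
    aestronglyMeasurable_of_tendsto_ae atTop hDnm
      (Filter.Eventually.of_forall fun x => sDn_tendsto k (u x))
  have hDabs : ∀ t, |sD k t| ≤ 1 := fun t => by
    rw [abs_of_nonneg (sD_nonneg k t)]; exact sD_le_one hk t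
  have mg1 : MemLp (fun x => (sD k (u x) * η x) • g x) (ENNReal.ofReal p) volume := by
    refine MemLp.of_le_mul (c := 1 * B) h.mg ((hDm.mul hηm).smul h.mg.1) ?_
    filter_upwards with x
    rw [norm_smul, norm_mul]
    gcongr
    · exact hDabs _
    · exact hηB _
  have mg2 : MemLp (fun x => sF k (u x) • gradient η x) (ENNReal.ofReal p) volume := by
    refine MemLp.of_le_mul (c := B) h.mu (hFm.smul hηg) ?_
    filter_upwards with x
    rw [norm_smul, mul_comm]
    gcongr
    · exact hηG _
    · exact hsF _
  refine Appr.lim (un := fun n x => sFn k (dn n) (u x) * η x)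
    (gn := fun n x => (sDn k (dn n) (u x) * η x) • g x + sFn k (dn n) (u x) • gradient η x)
    hp hVm (fun n => h.comp_mul hp hV hV0 (contDiff_sFn k (dn_pos n)) (sFn_zero k _)
      (hasDerivAt_sFn k (dn_pos n)) (continuous_sDn k (dn_pos n)) (abs_sDn_le k (dn_pos n))
      hη hηB hηG hsup) ?_ (mg1.add mg2) ?_ ?_ ?_ ?_
  · refine MemLp.of_le_mul (c := B) h.mu (hFm.mul hηm) ?_
    filter_upwards with x
    rw [norm_mul, mul_comm]
    gcongr
    · exact hηB _
    · exact hsF _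
  · refine MemLp.of_le_mul (c := B) h.mh (hVp.mul (hFm.mul hηm)) ?_
    filter_upwards with x
    rw [norm_mul, norm_mul, norm_mul]
    calc ‖V x ^ (1 / p)‖ * (|sF k (u x)| * |η x|) ≤ ‖V x ^ (1 / p)‖ * (|u x| * B) := by
          have i1 := hsF (u x)
          have i2 := hηB x
          gcongr ?_ * (?_ * ?_)
      _ = B * (‖V x ^ (1 / p)‖ * ‖u x‖) := by rw [Real.norm_eq_abs (u x)]; ring
  · refine dc_lemma hp _ (fun x => (3 * B) * ‖u x‖) ?_ (h.mu.norm.const_mul _) ?_ ?_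
    · intro n; exact ((hFnm n).mul hηm).sub (hFm.mul hηm)
    · intro n
      filter_upwards with x
      rw [← sub_mul, norm_mul, norm_mul, norm_norm, Real.norm_of_nonneg (by positivity : 0 ≤ 3 * B)]
      calc |sFn k (dn n) (u x) - sF k (u x)| * |η x| ≤ (3 * |u x|) * B := by
            gcongr
            · exact hdiff _ _
            · exact hηB _
        _ = _ := by rw [Real.norm_eq_abs]; ring
    · filter_upwards with x
      have := ((sFn_tendsto k (u x)).sub_const (sF k (u x))).mul_const (η x)
      simpa [sub_mul] using this
  · refine dc_lemma hp _ (fun x => (3 * B) * ‖g x‖ + (3 * B) * ‖u x‖) ?_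
      ((h.mg.norm.const_mul _).add (h.mu.norm.const_mul _)) ?_ ?_
    · intro n
      exact ((((hDnm n).mul hηm).smul h.mg.1).add ((hFnm n).smul hηg)).sub
        (((hDm.mul hηm).smul h.mg.1).add (hFm.smul hηg))
    · intro n
      filter_upwards with x
      have e : (sDn k (dn n) (u x) * η x) • g x + sFn k (dn n) (u x) • gradient η x -
          ((sD k (u x) * η x) • g x + sF k (u x) • gradient η x) =
          ((sDn k (dn n) (u x) - sD k (u x)) * η x) • g x +
          (sFn k (dn n) (u x) - sF k (u x)) • gradient η x := by module
      rw [e]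
      refine (norm_add_le _ _).trans ?_
      rw [norm_smul, norm_smul, norm_mul, Real.norm_of_nonneg (by positivity :
        0 ≤ 3 * B * ‖g x‖ + 3 * B * ‖u x‖)]
      refine add_le_add ?_ ?_
      · have i1 : ‖sDn k (dn n) (u x) - sD k (u x)‖ ≤ 3 := by
          refine (norm_sub_le _ _).trans ?_
          have := abs_sDn_le k (dn_pos n) (u x); have := hDabs (u x)
          simp only [Real.norm_eq_abs]
          linarith
        have i2 : ‖η x‖ ≤ B := hηB x
        gcongr
      · calc ‖sFn k (dn n) (u x) - sF k (u x)‖ * ‖gradient η x‖ ≤ (3 * |u x|) * B := by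
              gcongr
              · exact hdiff _ _
              · exact hηG _
          _ = _ := by rw [Real.norm_eq_abs]; ring
    · filter_upwards with x
      have a1 := ((sFn_tendsto k (u x)).smul_const (gradient η x))
      have a2 := (((sDn_tendsto k (u x)).mul_const (η x)).smul_const (g x))
      have a3 := (a2.add a1).sub_const ((sD k (u x) * η x) • g x + sF k (u x) • gradient η x)
      simpa using a3
  · refine dc_lemma hp _ (fun x => (3 * B) * ‖V x ^ (1 / p) * u x‖) ?_
      (h.mh.norm.const_mul _) ?_ ?_
    · intro n; exact hVp.mul (((hFnm n).mul hηm).sub (hFm.mul hηm))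
    · intro n
      filter_upwards with x
      rw [← sub_mul, norm_mul, norm_mul, norm_mul, norm_norm,
        Real.norm_of_nonneg (by positivity : 0 ≤ 3 * B), norm_mul]
      calc ‖V x ^ (1 / p)‖ * (|sFn k (dn n) (u x) - sF k (u x)| * |η x|)
            ≤ ‖V x ^ (1 / p)‖ * ((3 * |u x|) * B) := by
            gcongr
            · exact hdiff _ _
            · exact hηB _
        _ = _ := by rw [Real.norm_eq_abs (u x)]; ring
    · filter_upwards with x
      have := (((sFn_tendsto k (u x)).sub_const (sF k (u x))).mul_const (η x)).const_mul
        (V x ^ (1 / p))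
      simpa [sub_mul] using this

end part3


section part4

variable {N : ℕ} {p : ℝ}

lemma W10V.appr {V : EucN N → ℝ} (hp : 1 < p) (hV : LocallyIntegrable V volume)
    {Ω : Set (EucN N)} {w : SobTriple N (ENNReal.ofReal p)} (hw : w ∈ W10V N p hp.le Ω V) :
    Appr p Ω V w.1 w.2.1 ∧ (⇑w.2.2 =ᵐ[volume] fun x => V x ^ (1 / p) * w.1 x) := by
  haveI := fact_one_le_ofReal hp.le
  have hVm : AEStronglyMeasurable V volume := hV.aestronglyMeasurable
  have hVp : AEStronglyMeasurable (fun x => V x ^ (1 / p)) volume :=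
    (hVm.aemeasurable.pow_const _).aestronglyMeasurable
  have key : ∀ e : ℝ≥0∞, e ≠ 0 → ∃ ψ, IsTestFun Ω ψ ∧
    eLpNorm (fun x => ψ x - w.1 x) (ENNReal.ofReal p) volume ≤ e ∧
    eLpNorm (fun x => gradient ψ x - w.2.1 x) (ENNReal.ofReal p) volume ≤ e ∧
    eLpNorm (fun x => V x ^ (1 / p) * ψ x - w.2.2 x) (ENNReal.ofReal p) volume ≤ e := by
    intro e he
    have hw' : w ∈ closure {w | IsTestTriple (ENNReal.ofReal p) p Ω V w} := hw
    obtain ⟨v, ⟨ψ, hψ, h1, h2, h3⟩, hd⟩ := EMetric.mem_closure_iff.1 hw' e (pos_iff_ne_zero.2 he)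
    rw [edist_comm, Prod.edist_eq, Prod.edist_eq] at hd
    obtain ⟨d1, d2⟩ := max_lt_iff.1 hd
    obtain ⟨d2, d3⟩ := max_lt_iff.1 d2
    rw [Lp.edist_def] at d1 d2 d3
    refine ⟨ψ, hψ, ?_, ?_, ?_⟩
    · refine le_trans (le_of_eq (eLpNorm_congr_ae ?_)) d1.le
      filter_upwards [h1] with x hx
      simp [hx]
    · refine le_trans (le_of_eq (eLpNorm_congr_ae ?_)) d2.le
      filter_upwards [h2] with x hx
      simp [hx]
    · refine le_trans (le_of_eq (eLpNorm_congr_ae ?_)) d3.le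
      filter_upwards [h3] with x hx
      simp [hx]
  have hpos : ∀ n : ℕ, ((n : ℝ≥0∞) + 1)⁻¹ ≠ 0 := by
    intro n; simp
  choose ψ hψ h1 h2 h3 using fun n : ℕ => key (((n : ℝ≥0∞) + 1)⁻¹) (hpos n)
  have hlim : Tendsto (fun n : ℕ => ((n : ℝ≥0∞) + 1)⁻¹) atTop (𝓝 0) := by
    have := (tendsto_add_atTop_iff_nat (f := fun n : ℕ => (n : ℝ≥0∞)⁻¹) 1).2
      ENNReal.tendsto_inv_nat_nhds_zero
    simpa using this
  have t1 := tendsto_of_tendsto_of_tendsto_of_le_of_le tendsto_const_nhds hlim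
    (fun n => zero_le) h1
  have t3 := tendsto_of_tendsto_of_tendsto_of_le_of_le tendsto_const_nhds hlim
    (fun n => zero_le) h3
  have m1 := tendstoInMeasure_of_tendsto_eLpNorm (f := ψ) (g := w.1) (μ := volume)
    (ofReal_p_ne_zero hp) (fun n => (hψ n).1.continuous.aestronglyMeasurable)
    (Lp.memLp w.1).1 t1
  obtain ⟨σ, hσ, hae⟩ := m1.exists_seq_tendsto_ae
  have m3 := tendstoInMeasure_of_tendsto_eLpNorm (f := fun n x => V x ^ (1 / p) * ψ (σ n) x)
    (g := w.2.2) (μ := volume)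
    (ofReal_p_ne_zero hp) (fun n => hVp.mul (hψ (σ n)).1.continuous.aestronglyMeasurable)
    (Lp.memLp w.2.2).1 (t3.comp hσ.tendsto_atTop)
  obtain ⟨τ, hτ, hae'⟩ := m3.exists_seq_tendsto_ae
  have heq : ⇑w.2.2 =ᵐ[volume] fun x => V x ^ (1 / p) * w.1 x := by
    filter_upwards [hae, hae'] with x hx hx'
    exact tendsto_nhds_unique hx' ((hx.comp hτ.tendsto_atTop).const_mul _)
  refine ⟨⟨Lp.memLp _, Lp.memLp _, (memLp_congr_ae heq).1 (Lp.memLp _), ?_⟩, heq⟩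
  intro e he
  obtain ⟨ψ, hψ, a1, a2, a3⟩ := key e he
  refine ⟨ψ, hψ, a1, a2, le_trans (le_of_eq (eLpNorm_congr_ae ?_)) a3⟩
  filter_upwards [heq] with x hx
  rw [hx]; ring

lemma Appr.mem_W10 {V : EucN N → ℝ} (hp : 1 < p)
    {Ω : Set (EucN N)} {u : EucN N → ℝ} {g : EucN N → EucN N} (h : Appr p Ω V u g) :
    ((h.mu.toLp u, h.mg.toLp g) : SobPair N (ENNReal.ofReal p)) ∈ W10 N p hp.le Ω := by
  haveI := fact_one_le_ofReal hp.le
  change _ ∈ closure {w | IsTestPair (ENNReal.ofReal p) Ω w}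
  rw [EMetric.mem_closure_iff]
  intro e he
  obtain ⟨e', he', hlt⟩ := exists_between he
  obtain ⟨ψ, hψ, h1, h2, -⟩ := h.ap e' he'.ne'
  refine ⟨((hψ.memLp _).toLp ψ, (hψ.memLp_grad _).toLp _),
    ⟨ψ, hψ, MemLp.coeFn_toLp (hψ.memLp _), MemLp.coeFn_toLp (hψ.memLp_grad _)⟩, ?_⟩
  rw [edist_comm, Prod.edist_eq]
  refine max_lt ?_ ?_
  · rw [Lp.edist_toLp_toLp]; exact h1.trans_lt hlt
  · rw [Lp.edist_toLp_toLp]; exact h2.trans_lt hlt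

lemma Appr.poincare {V : EucN N → ℝ} (hp : 1 < p) (hV : LocallyIntegrable V volume)
    (hV0 : ∀ᵐ x, 0 ≤ V x)
    {Ω : Set (EucN N)} {u : EucN N → ℝ} {g : EucN N → EucN N} (h : Appr p Ω V u g)
    {L : ℝ} (hL0 : 0 ≤ L) (hL : ENNReal.ofReal L ≤ lambda1p N p hp.le Ω) :
    L * ∫ x, |u x| ^ p ≤ ∫ x, ‖g x‖ ^ p := by
  have hp0 : 0 < p := by linarith
  have hI0 : 0 ≤ ∫ x, |u x| ^ p := integral_nonneg fun x => by positivity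
  have hG0 : 0 ≤ ∫ x, ‖g x‖ ^ p := integral_nonneg fun x => by positivity
  rcases eq_or_lt_of_le hI0 with h0 | hpos
  · rw [← h0, mul_zero]; exact hG0
  set I := ∫ x, |u x| ^ p with hI
  set s : ℝ := I ^ (-1 / p) with hs
  have hspos : 0 < s := Real.rpow_pos_of_pos hpos _
  have hsp : s ^ p = I⁻¹ := by
    rw [hs, ← Real.rpow_mul hpos.le, div_mul_cancel₀ _ hp0.ne', Real.rpow_neg_one]
  have h' := h.comp_mul (Ω' := Ω) (F := fun t => s * t) (D := fun _ => s) (C := s) (B := 1)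
    (η := fun _ => 1) hp hV hV0 (by fun_prop) (by simp)
    (fun t => by simpa using (hasDerivAt_id t).const_mul s) continuous_const
    (fun t => (abs_of_pos hspos).le) contDiff_const (by simp) (by simp) (fun x hx _ => hx)
  have hg0 : ∀ x : EucN N, gradient (fun _ : EucN N => (1 : ℝ)) x = 0 := by
    intro x; simp
  have hmem := h'.mem_W10 hp
  have hle : lambda1p N p hp.le Ω ≤ ENNReal.ofReal (∫ x, ‖(h'.mg.toLp _ : EucN N → EucN N) x‖ ^ p) := by
    refine sInf_le ⟨_, hmem, ?_, rfl⟩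
    have : ∫ x, |(h'.mu.toLp _ : EucN N → ℝ) x| ^ p = ∫ x, s ^ p * |u x| ^ p := by
      refine integral_congr_ae ?_
      filter_upwards [h'.mu.coeFn_toLp] with x hx
      rw [hx, mul_one, abs_mul, abs_of_pos hspos, Real.mul_rpow hspos.le (abs_nonneg _)]
    rw [this, integral_const_mul, hsp, ← hI, inv_mul_cancel₀ hpos.ne']
  have h2 : ∫ x, ‖(h'.mg.toLp _ : EucN N → EucN N) x‖ ^ p = ∫ x, s ^ p * ‖g x‖ ^ p := by
    refine integral_congr_ae ?_
    filter_upwards [h'.mg.coeFn_toLp] with x hx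
    rw [hx, hg0, smul_zero, add_zero, mul_one, norm_smul, Real.norm_of_nonneg hspos.le,
      Real.mul_rpow hspos.le (norm_nonneg _)]
  rw [h2, integral_const_mul, hsp] at hle
  have h3 := hL.trans hle
  rw [ENNReal.ofReal_le_ofReal_iff (by positivity)] at h3
  rw [inv_mul_eq_div, le_div_iff₀ hpos] at h3
  exact h3

lemma memLp_rpow_sub_one {E : Type*} [NormedAddCommGroup E] (hp : 1 < p) {a : EucN N → E}
    (ha : MemLp a (ENNReal.ofReal p) volume) :
    MemLp (fun x => ‖a x‖ ^ (p - 1)) (ENNReal.ofReal (p / (p - 1))) volume := by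
  have h1 := ha.norm_rpow_div (ENNReal.ofReal (p - 1))
  rw [ENNReal.toReal_ofReal (by linarith)] at h1
  rwa [ENNReal.ofReal_div_of_pos (by linarith)]

lemma holder_bound {E E' : Type*} [NormedAddCommGroup E] [NormedAddCommGroup E'] (hp : 1 < p)
    {a : EucN N → E} (ha : MemLp a (ENNReal.ofReal p) volume) :
    ∃ C : ℝ, 0 ≤ C ∧ ∀ b : EucN N → E', MemLp b (ENNReal.ofReal p) volume →
      Integrable (fun x => ‖a x‖ ^ (p - 1) * ‖b x‖) volume ∧
      ∫ x, ‖a x‖ ^ (p - 1) * ‖b x‖ ≤ C * (eLpNorm b (ENNReal.ofReal p) volume).toReal := by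
  have hp0 : 0 < p := by linarith
  have hpq : (p / (p - 1)).HolderConjugate p := (Real.HolderConjugate.conjExponent hp).symm
  have hm := memLp_rpow_sub_one hp ha
  refine ⟨(∫ x, (‖a x‖ ^ (p - 1)) ^ (p / (p - 1))) ^ (1 / (p / (p - 1))), ?_, ?_⟩
  · exact Real.rpow_nonneg (integral_nonneg fun x => by positivity) _
  · intro b hb
    haveI : ENNReal.HolderTriple (ENNReal.ofReal (p / (p - 1))) (ENNReal.ofReal p) 1 := by
      have := hpq.ennrealOfReal
      exact this
    refine ⟨hm.integrable_mul hb.norm, ?_⟩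
    have := integral_mul_le_Lp_mul_Lq_of_nonneg (μ := (volume : Measure (EucN N))) hpq
      (f := fun x => ‖a x‖ ^ (p - 1)) (g := fun x => ‖b x‖)
      (Filter.Eventually.of_forall fun x => by positivity)
      (Filter.Eventually.of_forall fun x => by positivity) hm hb.norm
    refine this.trans (le_of_eq ?_)
    congr 1
    rw [hb.eLpNorm_eq_integral_rpow_norm (ofReal_p_ne_zero hp) ENNReal.ofReal_ne_top,
      ENNReal.toReal_ofReal hp0.le, ENNReal.toReal_ofReal, one_div]
    exact Real.rpow_nonneg (integral_nonneg fun x => by positivity) _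

lemma norm_rpow_mul_inner_le {E : Type*} [NormedAddCommGroup E] [InnerProductSpace ℝ E]
    (hp : 1 < p) (a b : E) : |‖a‖ ^ (p - 2) * ⟪a, b⟫| ≤ ‖a‖ ^ (p - 1) * ‖b‖ := by
  rcases eq_or_ne a 0 with rfl | ha
  · simp [Real.zero_rpow (by linarith : p - 1 ≠ 0)]
  · have hpos : 0 < ‖a‖ := norm_pos_iff.2 ha
    rw [abs_mul, abs_of_nonneg (by positivity : 0 ≤ ‖a‖ ^ (p - 2))]
    calc ‖a‖ ^ (p - 2) * |⟪a, b⟫| ≤ ‖a‖ ^ (p - 2) * (‖a‖ * ‖b‖) := by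
          gcongr; exact abs_real_inner_le_norm a b
      _ = ‖a‖ ^ (p - 1) * ‖b‖ := by
          rw [← mul_assoc, ← Real.rpow_add_one hpos.ne']; ring_nf

lemma pairing_bound {E : Type*} [NormedAddCommGroup E] [InnerProductSpace ℝ E] (hp : 1 < p)
    {a : EucN N → E} (ha : MemLp a (ENNReal.ofReal p) volume) :
    ∃ C : ℝ, 0 ≤ C ∧ ∀ b : EucN N → E, MemLp b (ENNReal.ofReal p) volume →
      Integrable (fun x => ‖a x‖ ^ (p - 2) * ⟪a x, b x⟫) volume ∧
      |∫ x, ‖a x‖ ^ (p - 2) * ⟪a x, b x⟫| ≤ C * (eLpNorm b (ENNReal.ofReal p) volume).toReal := by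
  obtain ⟨C, hC, hb⟩ := holder_bound (E' := E) hp ha
  refine ⟨C, hC, fun b hb' => ?_⟩
  obtain ⟨h1, h2⟩ := hb b hb'
  have hae : ∀ᵐ x, ‖‖a x‖ ^ (p - 2) * ⟪a x, b x⟫‖ ≤ ‖a x‖ ^ (p - 1) * ‖b x‖ :=
    Filter.Eventually.of_forall fun x => norm_rpow_mul_inner_le hp _ _
  refine ⟨h1.mono' ?_ hae, ?_⟩
  · exact (ha.1.norm.aemeasurable.pow_const _).aestronglyMeasurable.mul (ha.1.inner hb'.1)
  · exact (norm_integral_le_of_norm_le h1 hae).trans h2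

lemma V_pairing (hp : 1 < p) {v : ℝ} (hv : 0 ≤ v) (t f : ℝ) :
    ‖v ^ (1 / p) * t‖ ^ (p - 2) * ⟪v ^ (1 / p) * t, v ^ (1 / p) * f⟫ =
      v * |t| ^ (p - 2) * t * f := by
  have hp0 : 0 < p := by linarith
  rcases eq_or_lt_of_le hv with h | h
  · rw [← h]; simp [Real.zero_rpow (inv_ne_zero hp0.ne')]
  · have hpos : 0 < v ^ (1 / p) := Real.rpow_pos_of_pos h _
    rw [norm_mul, Real.norm_of_nonneg hpos.le, Real.mul_rpow hpos.le (norm_nonneg _),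
      Real.norm_eq_abs]
    have e : (v ^ (1 / p)) ^ (p - 2) * (v ^ (1 / p) * v ^ (1 / p)) = v := by
      rw [← Real.rpow_mul hv, ← Real.rpow_add h, ← Real.rpow_add h]
      have : 1 / p * (p - 2) + (1 / p + 1 / p) = 1 := by field_simp; ring
      rw [this, Real.rpow_one]
    simp only [real_inner_eq_re_inner, RCLike.inner_apply, conj_trivial, RCLike.re_to_real]
    calc _ = ((v ^ (1 / p)) ^ (p - 2) * (v ^ (1 / p) * v ^ (1 / p))) * |t| ^ (p - 2) * t * f := by
          ring
      _ = _ := by rw [e]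

lemma weak_eq {V : EucN N → ℝ} (hp : 1 < p) (hV : LocallyIntegrable V volume)
    (hV0 : ∀ᵐ x, 0 ≤ V x) {Ω : Set (EucN N)} {ε lam : ℝ}
    {w : SobTriple N (ENNReal.ofReal p)} (hw : IsCriticalV N p hp.le Ω V ε lam w)
    {φ : EucN N → ℝ} {γ : EucN N → EucN N} (h : Appr p Ω V φ γ) :
    Integrable (fun x => ‖w.2.1 x‖ ^ (p - 2) * ⟪w.2.1 x, γ x⟫) volume ∧
    Integrable (fun x => |w.1 x| ^ (p - 2) * (w.1 x) * φ x) volume ∧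
    (∫ x, ‖w.2.1 x‖ ^ (p - 2) * ⟪w.2.1 x, γ x⟫)
      + ε * ∫ x, V x * |w.1 x| ^ (p - 2) * (w.1 x) * φ x
    = lam * ∫ x, |w.1 x| ^ (p - 2) * (w.1 x) * φ x := by
  obtain ⟨hu, -⟩ := W10V.appr hp hV hw.1
  obtain ⟨C1, hC1, b1⟩ := pairing_bound hp hu.mg
  obtain ⟨C2, hC2, b2⟩ := pairing_bound hp hu.mh
  obtain ⟨C3, hC3, b3⟩ := pairing_bound hp hu.mu
  have e2 : ∀ f : EucN N → ℝ, (∫ x, V x * |w.1 x| ^ (p - 2) * (w.1 x) * f x) =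
      ∫ x, ‖V x ^ (1 / p) * w.1 x‖ ^ (p - 2) * ⟪V x ^ (1 / p) * w.1 x, V x ^ (1 / p) * f x⟫ := by
    intro f
    refine integral_congr_ae ?_
    filter_upwards [hV0] with x hx
    rw [V_pairing hp hx]
  have e3' : ∀ (f : EucN N → ℝ) x, |w.1 x| ^ (p - 2) * (w.1 x) * f x =
      ‖w.1 x‖ ^ (p - 2) * ⟪w.1 x, f x⟫ := by
    intro f x
    simp only [real_inner_eq_re_inner, RCLike.inner_apply, conj_trivial, RCLike.re_to_real,
      Real.norm_eq_abs]
    ring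
  have e3 : ∀ f : EucN N → ℝ, (∫ x, |w.1 x| ^ (p - 2) * (w.1 x) * f x) =
      ∫ x, ‖w.1 x‖ ^ (p - 2) * ⟪w.1 x, f x⟫ := fun f => integral_congr_ae
        (Filter.Eventually.of_forall fun x => e3' f x)
  refine ⟨(b1 γ h.mg).1, ?_, ?_⟩
  · refine (b3 φ h.mu).1.congr (Filter.Eventually.of_forall fun x => ?_)
    exact (e3' φ x).symm
  rw [e2, e3]
  rw [← sub_eq_zero, ← abs_eq_zero]
  refine le_antisymm ?_ (abs_nonneg _)
  set K := C1 + |ε| * C2 + |lam| * C3 with hK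
  have hK0 : 0 ≤ K := by positivity
  refine le_of_forall_pos_le_add fun δ hδ => ?_
  rw [zero_add]
  have hδ' : 0 < δ / (K + 1) := by positivity
  obtain ⟨ψ, hψ, a1, a2, a3⟩ := h.ap (ENNReal.ofReal (δ / (K + 1))) (by simpa using hδ')
  have hcr := hw.2.2 ψ hψ
  rw [e2, e3] at hcr
  have toR : ∀ {a : ℝ≥0∞}, a ≤ ENNReal.ofReal (δ / (K + 1)) → a.toReal ≤ δ / (K + 1) :=
    fun ha => ENNReal.toReal_le_of_le_ofReal hδ'.le ha
  have hψt := Appr.of_test hp hV hV0 hψ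
  have c1 := (b1 _ (hψt.mg.sub h.mg))
  have c2 := (b2 (fun x => V x ^ (1 / p) * (ψ x - φ x)) (by
    have := hψt.mh.sub h.mh
    refine (memLp_congr_ae (Filter.Eventually.of_forall fun x => ?_)).1 this
    simp only [Pi.sub_apply]; ring))
  have c3 := (b3 _ (hψt.mu.sub h.mu))
  have d1 : ∫ x, ‖w.2.1 x‖ ^ (p - 2) * ⟪w.2.1 x, ((fun x => gradient ψ x) - γ) x⟫ =
      (∫ x, ‖w.2.1 x‖ ^ (p - 2) * ⟪w.2.1 x, gradient ψ x⟫) -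
      ∫ x, ‖w.2.1 x‖ ^ (p - 2) * ⟪w.2.1 x, γ x⟫ := by
    rw [← integral_sub (b1 _ hψt.mg).1 (b1 _ h.mg).1]
    congr 1; ext x; simp only [Pi.sub_apply, inner_sub_right]; ring
  have d2 : ∫ x, ‖V x ^ (1 / p) * w.1 x‖ ^ (p - 2) *
        ⟪V x ^ (1 / p) * w.1 x, V x ^ (1 / p) * (ψ x - φ x)⟫ =
      (∫ x, ‖V x ^ (1 / p) * w.1 x‖ ^ (p - 2) * ⟪V x ^ (1 / p) * w.1 x, V x ^ (1 / p) * ψ x⟫) -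
      ∫ x, ‖V x ^ (1 / p) * w.1 x‖ ^ (p - 2) * ⟪V x ^ (1 / p) * w.1 x, V x ^ (1 / p) * φ x⟫ := by
    rw [← integral_sub (b2 _ hψt.mh).1 (b2 _ h.mh).1]
    congr 1; ext x; rw [mul_sub (V x ^ (1 / p)) (ψ x), inner_sub_right]; ring
  have d3 : ∫ x, ‖w.1 x‖ ^ (p - 2) * ⟪w.1 x, (ψ - φ) x⟫ =
      (∫ x, ‖w.1 x‖ ^ (p - 2) * ⟪w.1 x, ψ x⟫) -
      ∫ x, ‖w.1 x‖ ^ (p - 2) * ⟪w.1 x, φ x⟫ := by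
    rw [← integral_sub (b3 _ hψt.mu).1 (b3 _ h.mu).1]
    congr 1; ext x; simp only [Pi.sub_apply, inner_sub_right]; ring
  have f1 := c1.2.trans (mul_le_mul_of_nonneg_left (toR a2) hC1)
  have f2 := c2.2.trans (mul_le_mul_of_nonneg_left (toR a3) hC2)
  have f3 := c3.2.trans (mul_le_mul_of_nonneg_left (toR a1) hC3)
  rw [d1] at f1
  rw [d2] at f2
  rw [d3] at f3
  generalize (∫ x, ‖w.2.1 x‖ ^ (p - 2) * ⟪w.2.1 x, gradient ψ x⟫) = A1 at *
  generalize (∫ x, ‖w.2.1 x‖ ^ (p - 2) * ⟪w.2.1 x, γ x⟫) = A1' at *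
  generalize (∫ x, ‖V x ^ (1 / p) * w.1 x‖ ^ (p - 2) *
    ⟪V x ^ (1 / p) * w.1 x, V x ^ (1 / p) * ψ x⟫) = A2 at *
  generalize (∫ x, ‖V x ^ (1 / p) * w.1 x‖ ^ (p - 2) *
    ⟪V x ^ (1 / p) * w.1 x, V x ^ (1 / p) * φ x⟫) = A2' at *
  generalize (∫ x, ‖w.1 x‖ ^ (p - 2) * ⟪w.1 x, ψ x⟫) = A3 at *
  generalize (∫ x, ‖w.1 x‖ ^ (p - 2) * ⟪w.1 x, φ x⟫) = A3' at *
  have g1 : A1' + ε * A2' - lam * A3' = -(A1 - A1') + -(ε * (A2 - A2')) + lam * (A3 - A3') := by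
    linarith
  rw [g1]
  calc |-(A1 - A1') + -(ε * (A2 - A2')) + lam * (A3 - A3')|
      ≤ |A1 - A1'| + |ε| * |A2 - A2'| + |lam| * |A3 - A3'| := by
        refine (abs_add_le _ _).trans (add_le_add ((abs_add_le _ _).trans (add_le_add ?_ ?_)) ?_)
        · rw [abs_neg]
        · rw [abs_neg, abs_mul]
        · rw [abs_mul]
    _ ≤ C1 * (δ / (K + 1)) + |ε| * (C2 * (δ / (K + 1))) + |lam| * (C3 * (δ / (K + 1))) := by
        gcongr
    _ = K * (δ / (K + 1)) := by rw [hK]; ring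
    _ ≤ δ := by
        rw [mul_div_assoc', div_le_iff₀ (by positivity)]
        nlinarith

end part4

section part5

variable {N : ℕ} {p : ℝ}

/-- The smooth Japanese bracket. -/
def jb (x : EucN N) : ℝ := √(1 + ‖x‖ ^ 2)

lemma one_le_jb (x : EucN N) : 1 ≤ jb x := by
  unfold jb
  rw [Real.one_le_sqrt]
  nlinarith [sq_nonneg ‖x‖]

lemma norm_le_jb (x : EucN N) : ‖x‖ ≤ jb x := by
  unfold jb
  apply Real.le_sqrt_of_sq_le
  linarith

lemma jb_le (x : EucN N) : jb x ≤ 1 + ‖x‖ := by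
  unfold jb
  rw [Real.sqrt_le_left (by positivity)]
  nlinarith [norm_nonneg x]

lemma contDiff_jb : ContDiff ℝ (⊤ : ℕ∞) (jb : EucN N → ℝ) := by
  unfold jb
  apply ContDiff.sqrt
  · exact contDiff_const.add (contDiff_norm_sq ℝ)
  · intro x; positivity

lemma continuous_jb : Continuous (jb : EucN N → ℝ) := contDiff_jb.continuous

lemma lipschitz_jb : LipschitzWith 1 (jb : EucN N → ℝ) := by
  apply LipschitzWith.of_le_add
  intro x y
  have h1 : ‖x‖ ≤ ‖y‖ + dist x y := by
    have := norm_le_norm_add_norm_sub' x y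
    rwa [← dist_eq_norm] at this
  have h2 := norm_le_jb y
  have h3 : jb y ^ 2 = 1 + ‖y‖ ^ 2 := Real.sq_sqrt (by positivity)
  have h0 := one_le_jb y
  have hd : 0 ≤ dist x y := dist_nonneg
  conv_lhs => unfold jb
  rw [Real.sqrt_le_left (by positivity)]
  have h4 : ‖x‖ ^ 2 ≤ (‖y‖ + dist x y) ^ 2 := by gcongr
  nlinarith [mul_le_mul_of_nonneg_right h2 hd]

lemma smoothTransition_deriv_bound : ∃ c : ℝ, 0 < c ∧ ∀ t, |deriv Real.smoothTransition t| ≤ c := by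
  have hc : Continuous (deriv Real.smoothTransition) :=
    (Real.smoothTransition.contDiff (n := 1)).continuous_deriv le_rfl
  obtain ⟨c, hc⟩ := (isCompact_Icc (a := (0:ℝ)) (b := 1)).exists_bound_of_continuousOn hc.continuousOn
  refine ⟨max c 1, by positivity, fun t => ?_⟩
  by_cases h0 : t ≤ 0
  · have : IsLocalMin Real.smoothTransition t := by
      refine Filter.Eventually.of_forall fun s => ?_
      rw [Real.smoothTransition.zero_of_nonpos h0]
      exact Real.smoothTransition.nonneg s
    rw [this.deriv_eq_zero]; simp
  by_cases h1 : 1 ≤ t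
  · have : IsLocalMax Real.smoothTransition t := by
      refine Filter.Eventually.of_forall fun s => ?_
      rw [Real.smoothTransition.one_of_one_le h1]
      exact Real.smoothTransition.le_one s
    rw [this.deriv_eq_zero]; simp
  · exact (hc t ⟨by linarith, by linarith⟩).trans (le_max_left _ _)

/-- Properties of a radial cutoff between the levels `r` and `r + 1 / κ`. -/
structure IsCut (p : ℝ) (c r κ : ℝ) (η : EucN N → ℝ) : Prop where
  smooth : ContDiff ℝ (⊤ : ℕ∞) η
  nonneg : ∀ x, 0 ≤ η x
  le_one : ∀ x, η x ≤ 1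
  zero : ∀ x, jb x ≤ r → η x = 0
  one : ∀ x, r + 1 / κ ≤ jb x → η x = 1
  grad : ∀ x, ‖gradient η x‖ ≤ c * κ * η x ^ ((p - 1) / p)
  supp : ∀ x ∈ tsupport η, r ≤ jb x

lemma IsCut.grad_zero {c r κ : ℝ} {η : EucN N → ℝ} (h : IsCut p c r κ η) (x : EucN N)
    (hx : r + 1 / κ ≤ jb x) : gradient η x = 0 := by
  have : IsLocalMax η x := by
    refine Filter.Eventually.of_forall fun s => ?_
    rw [h.one x hx]
    exact h.le_one s
  rw [gradient, this.fderiv_eq_zero, map_zero]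

lemma exists_cut (hp : 1 < p) : ∃ c : ℝ, 0 < c ∧ ∀ (N : ℕ) (r κ : ℝ), 0 < κ →
    ∃ η : EucN N → ℝ, IsCut p c r κ η := by
  obtain ⟨c0, hc0, hS⟩ := smoothTransition_deriv_bound
  have hp0 : 0 < p := by linarith
  obtain ⟨m0, hm0⟩ := exists_nat_ge p
  set m := m0 + 1 with hm
  refine ⟨m * c0, by positivity, fun N r κ hκ => ?_⟩
  set S := Real.smoothTransition
  set ζ : EucN N → ℝ := fun x => S (κ * (jb x - r)) with hζ
  have hζs : ContDiff ℝ (⊤ : ℕ∞) ζ :=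
    Real.smoothTransition.contDiff.comp (contDiff_const.mul (contDiff_jb.sub contDiff_const))
  have hζ0 : ∀ x, 0 ≤ ζ x := fun x => Real.smoothTransition.nonneg _
  have hζ1 : ∀ x, ζ x ≤ 1 := fun x => Real.smoothTransition.le_one _
  have hz : ∀ x, jb x ≤ r → ζ x = 0 := fun x hx => by
    apply Real.smoothTransition.zero_of_nonpos
    nlinarith
  refine ⟨fun x => ζ x ^ m, hζs.pow m, fun x => pow_nonneg (hζ0 x) _,
    fun x => pow_le_one₀ (hζ0 x) (hζ1 x), fun x hx => ?_, fun x hx => ?_, fun x => ?_, ?_⟩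
  · simp [hz x hx, hm]
  · have : ζ x = 1 := by
      apply Real.smoothTransition.one_of_one_le
      have h1 : 1 / κ ≤ jb x - r := by linarith
      rw [div_le_iff₀ hκ] at h1
      linarith
    simp [this]
  · have hdj : HasFDerivAt (jb : EucN N → ℝ) (fderiv ℝ jb x) x :=
      (contDiff_jb.differentiable (by simp) x).hasFDerivAt
    have hdS : HasDerivAt S (deriv S (κ * (jb x - r))) (κ * (jb x - r)) :=
      (((Real.smoothTransition.contDiff (n := 1)).differentiable one_ne_zero) _).hasDerivAt
    have h1 : HasFDerivAt (fun x : EucN N => κ * (jb x - r)) (κ • fderiv ℝ jb x) x :=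
      (hdj.sub_const r).const_mul κ
    have h2 := hdS.comp_hasFDerivAt x h1
    have h3 := h2.pow m
    have hnj : ‖fderiv ℝ (jb : EucN N → ℝ) x‖ ≤ 1 := by
      simpa using norm_fderiv_le_of_lipschitz ℝ (lipschitz_jb (N := N)) (x₀ := x)
    have h4 : ‖gradient (fun x => ζ x ^ m) x‖ = ‖fderiv ℝ (fun x => ζ x ^ m) x‖ := by
      rw [gradient, LinearIsometryEquiv.norm_map]
    rw [h4]
    have h5 : fderiv ℝ (fun x => ζ x ^ m) x = _ := h3.fderiv
    rw [h5]
    have hz0 := hζ0 x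
    have hz1 := hζ1 x
    have h6 : ζ x ^ (m - 1) ≤ (ζ x ^ m) ^ ((p - 1) / p) := by
      rcases eq_or_lt_of_le hz0 with h0 | h0
      · rw [← h0]
        have hm1 : m - 1 ≠ 0 := by
          have : (1:ℝ) < m0 := by linarith
          have : 1 < m0 := by exact_mod_cast this
          omega
        rw [zero_pow hm1]
        positivity
      · rw [← Real.rpow_natCast, ← Real.rpow_natCast, ← Real.rpow_mul hz0]
        apply Real.rpow_le_rpow_of_exponent_ge h0 hz1
        have e1 : ((m - 1 : ℕ) : ℝ) = m0 := by rw [hm, Nat.add_sub_cancel]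
        have e2 : (m : ℝ) = m0 + 1 := by rw [hm]; push_cast; ring
        rw [e1, e2]
        rw [mul_div_assoc', div_le_iff₀ hp0]
        nlinarith
    have h7 : ‖(m • (S ∘ fun x : EucN N => κ * (jb x - r)) x ^ (m - 1))‖ = m * ζ x ^ (m-1) := by
      rw [nsmul_eq_mul, norm_mul, norm_pow, Real.norm_natCast]
      congr 2
      exact abs_of_nonneg hz0
    rw [norm_smul, h7, norm_smul, norm_smul]
    calc m * ζ x ^ (m - 1) * (‖deriv S (κ * (jb x - r))‖ * (‖κ‖ * ‖fderiv ℝ (jb : EucN N → ℝ) x‖))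
        ≤ m * (ζ x ^ m) ^ ((p - 1) / p) * (c0 * (κ * 1)) := by
          gcongr
          · exact hS _
          · exact (abs_of_pos hκ).le
      _ = _ := by ring
  · have hcl : IsClosed {x : EucN N | r ≤ jb x} := isClosed_le continuous_const continuous_jb
    refine closure_minimal ?_ hcl
    intro x hx
    by_contra hc
    apply hx
    replace hc : jb x < r := not_le.1 hc
    simp [hz x hc.le, hm]

end part5

section part6

variable {N : ℕ} {p : ℝ}

lemma young_like (hp : 1 < p) {δ : ℝ} (hδ : 0 < δ) {a b : ℝ} (ha : 0 ≤ a) (hb : 0 ≤ b) :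
    a ^ (p - 1) * b ≤ δ * a ^ p + δ ^ (1 - p) * b ^ p := by
  have hd : 0 < δ ^ (1 - p) := Real.rpow_pos_of_pos hδ _
  rcases eq_or_lt_of_le ha with h0 | h0
  · rw [← h0, Real.zero_rpow (by linarith), Real.zero_rpow (by linarith)]
    simp only [zero_mul, mul_zero, zero_add]
    positivity
  by_cases hba : b ≤ δ * a
  · have : a ^ (p - 1) * b ≤ δ * a ^ p := by
      calc a ^ (p - 1) * b ≤ a ^ (p - 1) * (δ * a) := by gcongr
        _ = δ * (a ^ (p - 1) * a) := by ring
        _ = δ * a ^ p := by rw [← Real.rpow_add_one h0.ne']; ring_nf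
    have : 0 ≤ δ ^ (1 - p) * b ^ p := by positivity
    linarith
  · push Not at hba
    have hb0 : 0 < b := lt_of_le_of_lt (by positivity) hba
    have h1 : a ≤ b / δ := by rw [le_div_iff₀ hδ]; linarith
    have : a ^ (p - 1) * b ≤ δ ^ (1 - p) * b ^ p := by
      calc a ^ (p - 1) * b ≤ (b / δ) ^ (p - 1) * b := by
            gcongr
        _ = δ ^ (1 - p) * (b ^ (p - 1) * b) := by
            rw [Real.div_rpow hb hδ.le, show 1 - p = -(p - 1) by ring, Real.rpow_neg hδ.le]
            field_simp
        _ = δ ^ (1 - p) * b ^ p := by rw [← Real.rpow_add_one hb0.ne']; ring_nf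
    have : 0 ≤ δ * a ^ p := by positivity
    linarith

lemma add_rpow_le (hp : 1 < p) {δ : ℝ} (hδ : 0 < δ) : ∃ C : ℝ, 0 ≤ C ∧ ∀ a b : ℝ, 0 ≤ a → 0 ≤ b →
    (a + b) ^ p ≤ (1 + δ) * a ^ p + C * b ^ p := by
  have hp0 : 0 < p := by linarith
  have hcont : Tendsto (fun s : ℝ => (1 + s) ^ p) (𝓝[>] 0) (𝓝 1) := by
    have : ContinuousAt (fun s : ℝ => (1 + s) ^ p) 0 := by
      apply ContinuousAt.rpow_const
      · fun_prop
      · left; norm_num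
    have h := this.tendsto
    simp only [add_zero, Real.one_rpow] at h
    exact h.mono_left nhdsWithin_le_nhds
  have h1 : ∀ᶠ s in 𝓝[>] (0:ℝ), (1 + s) ^ p < 1 + δ := hcont.eventually (gt_mem_nhds (by linarith))
  obtain ⟨s, hs, hs0⟩ := (h1.and self_mem_nhdsWithin).exists
  replace hs0 : 0 < s := hs0
  refine ⟨(1 / s + 1) ^ p, by positivity, fun a b ha hb => ?_⟩
  by_cases hba : b ≤ s * a
  · have : (a + b) ^ p ≤ (1 + δ) * a ^ p := by
      calc (a + b) ^ p ≤ ((1 + s) * a) ^ p := by gcongr; linarith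
        _ = (1 + s) ^ p * a ^ p := Real.mul_rpow (by positivity) ha
        _ ≤ _ := by gcongr
    have : 0 ≤ (1 / s + 1) ^ p * b ^ p := by positivity
    linarith
  · push Not at hba
    have h1 : a ≤ 1 / s * b := by rw [one_div, inv_mul_eq_div, le_div_iff₀ hs0]; linarith
    have : (a + b) ^ p ≤ (1 / s + 1) ^ p * b ^ p := by
      rw [← Real.mul_rpow (by positivity) hb]
      gcongr
      linarith
    have : 0 ≤ (1 + δ) * a ^ p := by positivity
    linarith

lemma measurable_sign' : Measurable Real.sign := by
  unfold Real.sign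
  exact Measurable.ite measurableSet_Iio measurable_const
    (Measurable.ite measurableSet_Ioi measurable_const measurable_const)

lemma measurable_sD (k : ℝ) : Measurable (sD k) := by
  unfold sD
  exact (((measurable_sign'.comp (measurable_id.sub_const k)).sub
    (measurable_sign'.comp (measurable_id.add_const k))).div_const 2).const_add 1

lemma abs_sF_le {k : ℝ} (hk : 0 ≤ k) (t : ℝ) : |sF k t| ≤ |t| := by
  rw [abs_sF hk]; exact max_le (by linarith) (abs_nonneg t)

lemma pair_sF (hp : 1 < p) {k : ℝ} (hk : 0 ≤ k) (t : ℝ) :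
    |t| ^ (p - 2) * t * sF k t = |t| ^ (p - 1) * |sF k t| := by
  rcases eq_or_ne t 0 with rfl | ht
  · have := abs_sF_le hk 0
    simp only [abs_zero] at this
    simp [Real.zero_rpow (by linarith : p - 1 ≠ 0)]
  · have hpos : 0 < |t| := abs_pos.2 ht
    have h1 : t * sF k t = |t| * |sF k t| := by
      rw [← abs_mul, abs_of_nonneg (mul_sF_nonneg hk t)]
    rw [mul_assoc, h1, ← mul_assoc, ← Real.rpow_add_one hpos.ne']
    ring_nf

lemma integrable_rpow {E : Type*} [NormedAddCommGroup E] (hp : 1 < p) {a : EucN N → E}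
    (ha : MemLp a (ENNReal.ofReal p) volume) : Integrable (fun x => ‖a x‖ ^ p) volume := by
  have := ha.integrable_norm_rpow (ofReal_p_ne_zero hp) ENNReal.ofReal_ne_top
  rwa [ENNReal.toReal_ofReal (by linarith)] at this

end part6

section part7

variable {N : ℕ} {p : ℝ}

lemma cacc_pt1 (hp : 1 < p) {δ : ℝ} (hδ : 0 < δ) (g G : EucN N) {s d e c : ℝ} (hc : 0 ≤ c)
    (he0 : 0 ≤ e) (hd0 : 0 ≤ d) (hsd : s ≠ 0 → d = 1)
    (hG : ‖G‖ ≤ c * e ^ ((p - 1) / p)) :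
    (1 - δ) * (d * e * ‖g‖ ^ p) - δ ^ (1 - p) * (c ^ p * |s| ^ p) ≤
      ‖g‖ ^ (p - 2) * ⟪g, (d * e) • g + s • G⟫ := by
  have hp0 : 0 < p := by linarith
  rw [inner_add_right, inner_smul_right, inner_smul_right, mul_add, real_inner_self_eq_norm_sq]
  have h1 : ‖g‖ ^ (p - 2) * (d * e * ‖g‖ ^ 2) = d * e * ‖g‖ ^ p := by
    rcases eq_or_ne g 0 with rfl | hg
    · simp [Real.zero_rpow hp0.ne']
    · have : 0 < ‖g‖ := norm_pos_iff.2 hg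
      have e2 : ‖g‖ ^ (p - 2) * ‖g‖ ^ 2 = ‖g‖ ^ p := by
        rw [← Real.rpow_natCast, ← Real.rpow_add this]; norm_num
      rw [← e2]; ring
  rw [h1]
  by_cases hs : s = 0
  · subst hs
    simp only [abs_zero, Real.zero_rpow hp0.ne', zero_mul, mul_zero, sub_zero, add_zero]
    have : 0 ≤ d * e * ‖g‖ ^ p := by positivity
    nlinarith
  · have hd1 := hsd hs
    subst hd1
    have h2 : ‖g‖ ^ (p - 2) * (s * ⟪g, G⟫) = s * (‖g‖ ^ (p - 2) * ⟪g, G⟫) := by ring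
    have h3 : |s * (‖g‖ ^ (p - 2) * ⟪g, G⟫)| ≤ |s| * (‖g‖ ^ (p - 1) * ‖G‖) := by
      rw [abs_mul]; gcongr; exact norm_rpow_mul_inner_le hp g G
    have h4 : |s| * (‖g‖ ^ (p - 1) * ‖G‖) ≤ (‖g‖ * e ^ (1 / p)) ^ (p - 1) * (c * |s|) := by
      calc |s| * (‖g‖ ^ (p - 1) * ‖G‖) ≤ |s| * (‖g‖ ^ (p - 1) * (c * e ^ ((p - 1) / p))) := by gcongr
        _ = _ := by
          rw [Real.mul_rpow (norm_nonneg _) (by positivity), ← Real.rpow_mul he0]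
          rw [show 1 / p * (p - 1) = (p - 1) / p by ring]; ring
    have h5 := young_like hp hδ (a := ‖g‖ * e ^ (1 / p)) (b := c * |s|) (by positivity) (by positivity)
    have h6 : (‖g‖ * e ^ (1 / p)) ^ p = e * ‖g‖ ^ p := by
      rw [Real.mul_rpow (norm_nonneg _) (by positivity), ← Real.rpow_mul he0,
        one_div_mul_cancel hp0.ne', Real.rpow_one]; ring
    rw [h6, Real.mul_rpow hc (abs_nonneg s)] at h5
    have h7 := neg_abs_le (s * (‖g‖ ^ (p - 2) * ⟪g, G⟫))
    rw [h2]
    nlinarith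

lemma cacc_pt2 (hp : 1 < p) {δ C : ℝ} (hδ : 0 < δ) (hC0 : 0 ≤ C)
    (hC : ∀ a b : ℝ, 0 ≤ a → 0 ≤ b →
      (a + b) ^ p ≤ (1 + δ) * a ^ p + C * b ^ p) (g G : EucN N) {s d e c : ℝ} (hc : 0 ≤ c)
    (he0 : 0 ≤ e) (he1 : e ≤ 1) (hd0 : 0 ≤ d) (hd1 : d ≤ 1)
    (hG : ‖G‖ ≤ c * e ^ ((p - 1) / p)) :
    ‖(d * e) • g + s • G‖ ^ p ≤ (1 + δ) * (d * e * ‖g‖ ^ p) + C * (c ^ p * |s| ^ p) := by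
  have hp0 : 0 < p := by linarith
  have hG' : ‖G‖ ≤ c := by
    refine hG.trans ?_
    have : e ^ ((p - 1) / p) ≤ 1 := Real.rpow_le_one he0 he1 (div_nonneg (by linarith) hp0.le)
    nlinarith
  have h1 : ‖(d * e) • g + s • G‖ ≤ d * e * ‖g‖ + c * |s| := by
    refine (norm_add_le _ _).trans ?_
    rw [norm_smul, norm_smul, Real.norm_of_nonneg (by positivity : 0 ≤ d * e), Real.norm_eq_abs]
    have : |s| * ‖G‖ ≤ |s| * c := by gcongr
    linarith
  calc ‖(d * e) • g + s • G‖ ^ p ≤ (d * e * ‖g‖ + c * |s|) ^ p := by gcongr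
    _ ≤ (1 + δ) * (d * e * ‖g‖) ^ p + C * (c * |s|) ^ p := hC _ _ (by positivity) (by positivity)
    _ ≤ (1 + δ) * (d * e * ‖g‖ ^ p) + C * (c ^ p * |s| ^ p) := by
      rw [Real.mul_rpow hc (abs_nonneg s), Real.mul_rpow (by positivity) (norm_nonneg g)]
      gcongr
      have hde : d * e ≤ 1 := by nlinarith
      calc (d * e) ^ p ≤ (d * e) ^ (1:ℝ) :=
            Real.rpow_le_rpow_of_exponent_ge' (by positivity) hde (by norm_num) hp.le
        _ = d * e := Real.rpow_one _

/-- The annulus where the gradient of a cutoff lives. -/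
def ann (N : ℕ) (r κ : ℝ) : Set (EucN N) := {x | r < jb x ∧ jb x < r + 1 / κ}

lemma measurableSet_ann (r κ : ℝ) : MeasurableSet (ann N r κ) :=
  ((isOpen_lt continuous_const continuous_jb).inter
    (isOpen_lt continuous_jb continuous_const)).measurableSet

lemma IsCut.grad_ind (hp : 1 < p) {c r κ : ℝ} {η : EucN N → ℝ} (h : IsCut p c r κ η) (x : EucN N) :
    ‖gradient η x‖ ≤ (ann N r κ).indicator (fun _ => c * κ) x * η x ^ ((p - 1) / p) := by
  have hq : (p - 1) / p ≠ 0 := div_ne_zero (by linarith) (by linarith)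
  by_cases hx : x ∈ ann N r κ
  · rw [indicator_of_mem hx]; exact h.grad x
  · rw [indicator_of_notMem hx, zero_mul]
    by_cases h1 : r < jb x
    · have : r + 1 / κ ≤ jb x := by
        by_contra hc
        exact hx ⟨h1, not_le.1 hc⟩
      rw [h.grad_zero x this]; simp
    · have h2 := h.grad x
      rw [h.zero x (not_lt.1 h1), Real.zero_rpow hq] at h2
      simpa using h2

lemma IsCut.appr {V : EucN N → ℝ} (hp : 1 < p) (hV : LocallyIntegrable V volume)
    (hV0 : ∀ᵐ x, 0 ≤ V x) {Ω Ω' : Set (EucN N)} {u : EucN N → ℝ} {g : EucN N → EucN N}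
    (h : Appr p Ω V u g) {k : ℝ} (hk : 0 ≤ k) {c r κ : ℝ} (hc : 0 < c) (hκ : 0 < κ)
    {η : EucN N → ℝ} (hη : IsCut p c r κ η) (hsup : ∀ x ∈ Ω, x ∈ tsupport η → x ∈ Ω') :
    Appr p Ω' V (fun x => sF k (u x) * η x)
      (fun x => (sD k (u x) * η x) • g x + sF k (u x) • gradient η x) := by
  refine h.soft hp hV hV0 hk (B := max 1 (c * κ)) hη.smooth (fun x => ?_) (fun x => ?_) hsup
  · rw [abs_of_nonneg (hη.nonneg x)]; exact (hη.le_one x).trans (le_max_left _ _)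
  · refine le_trans ?_ (le_max_right _ _)
    have h1 := hη.grad x
    have : η x ^ ((p - 1) / p) ≤ 1 :=
      Real.rpow_le_one (hη.nonneg x) (hη.le_one x) (div_nonneg (by linarith) (by linarith))
    have : 0 < c * κ := by positivity
    nlinarith

lemma caccioppoli (hp : 1 < p) {c : ℝ} (hc : 0 < c) {τ : ℝ} (hτ : 0 < τ) :
    ∃ C : ℝ, 0 ≤ C ∧ ∀ (N : ℕ) (Ω : Set (EucN N)) (V : EucN N → ℝ),
      LocallyIntegrable V volume → (∀ᵐ x, 0 ≤ V x) → ∀ (ε lam : ℝ), 0 ≤ ε →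
      ∀ w : SobTriple N (ENNReal.ofReal p), IsCriticalV N p hp.le Ω V ε lam w →
      ∀ k : ℝ, 0 ≤ k → ∀ r κ : ℝ, 0 < κ → ∀ η : EucN N → ℝ, IsCut p c r κ η →
      ∫ x, ‖(sD k (w.1 x) * η x) • w.2.1 x + sF k (w.1 x) • gradient η x‖ ^ p ≤
        (1 + τ) * (lam * ∫ x, |w.1 x| ^ (p - 1) * |sF k (w.1 x)| * η x)
          + C * κ ^ p * ∫ x in ann N r κ, |sF k (w.1 x)| ^ p := by
  have hp0 : 0 < p := by linarith
  set δ := τ / (2 + τ) with hδ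
  have hδ0 : 0 < δ := by positivity
  obtain ⟨C, hC0, hC⟩ := add_rpow_le hp hδ0
  have hfac : (1 + δ) = (1 + τ) * (1 - δ) := by rw [hδ]; field_simp; ring
  refine ⟨((1 + τ) * δ ^ (1 - p) + C) * c ^ p, by positivity, ?_⟩
  intro N Ω V hV hV0 ε lam hε w hw k hk r κ hκ η hη
  obtain ⟨hA, -⟩ := W10V.appr hp hV hw.1
  have hT := hη.appr hp hV hV0 hA hk hc hκ (Ω' := Ω) (fun x hx _ => hx)
  obtain ⟨i1, i2, heq⟩ := weak_eq hp hV hV0 hw hT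
  set u := w.1
  set g := w.2.1
  set c' : EucN N → ℝ := (ann N r κ).indicator (fun _ => c * κ) with hc'
  have hc'0 : ∀ x, 0 ≤ c' x := fun x => indicator_nonneg (fun _ _ => by positivity) x
  -- integrability
  have iu : Integrable (fun x => |u x| ^ p) volume := integrable_rpow hp hA.mu
  have ig : Integrable (fun x => ‖g x‖ ^ p) volume := integrable_rpow hp hA.mg
  have iX : Integrable (fun x => sD k (u x) * η x * ‖g x‖ ^ p) volume := by
    refine ig.mono' ?_ (Eventually.of_forall fun x => ?_)
    · refine AEStronglyMeasurable.mul (AEStronglyMeasurable.mul ?_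
        hη.smooth.continuous.aestronglyMeasurable) ig.1
      exact ((measurable_sD k).comp_aemeasurable hA.mu.1.aemeasurable).aestronglyMeasurable
    · have h1 := sD_nonneg k (u x)
      have h2 := sD_le_one hk (u x)
      have h3 := hη.nonneg x
      have h4 := hη.le_one x
      rw [Real.norm_of_nonneg (by positivity)]
      have : sD k (u x) * η x ≤ 1 := by nlinarith
      have h5 : 0 ≤ ‖g x‖ ^ p := by positivity
      nlinarith
  have is : Integrable (fun x => |sF k (u x)| ^ p) volume := by
    refine iu.mono' ?_ (Eventually.of_forall fun x => ?_)
    · exact (((continuous_sF k).comp_aestronglyMeasurable hA.mu.1).norm.aemeasurable.pow_const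
        p).aestronglyMeasurable
    · rw [Real.norm_of_nonneg (by positivity)]
      have := abs_sF_le hk (u x)
      gcongr
  have eZ : ∀ x, c' x ^ p * |sF k (u x)| ^ p =
      (c * κ) ^ p * (ann N r κ).indicator (fun x => |sF k (u x)| ^ p) x := by
    intro x
    by_cases hx : x ∈ ann N r κ
    · rw [hc', indicator_of_mem hx, indicator_of_mem hx]
    · rw [hc', indicator_of_notMem hx, indicator_of_notMem hx, Real.zero_rpow hp0.ne']; simp
  have iZ : Integrable (fun x => c' x ^ p * |sF k (u x)| ^ p) volume := by
    simp_rw [eZ]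
    exact (is.indicator (measurableSet_ann r κ)).const_mul _
  have vZ : ∫ x, c' x ^ p * |sF k (u x)| ^ p = (c * κ) ^ p * ∫ x in ann N r κ, |sF k (u x)| ^ p := by
    simp_rw [eZ]
    rw [integral_const_mul, integral_indicator (measurableSet_ann r κ)]
  set X := ∫ x, sD k (u x) * η x * ‖g x‖ ^ p with hX
  set Z := ∫ x, c' x ^ p * |sF k (u x)| ^ p with hZ
  -- first inequality
  have e1 : (1 - δ) * X - δ ^ (1 - p) * Z ≤
      ∫ x, ‖g x‖ ^ (p - 2) * ⟪g x, (sD k (u x) * η x) • g x + sF k (u x) • gradient η x⟫ := by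
    rw [hX, hZ, ← integral_const_mul, ← integral_const_mul, ← integral_sub (iX.const_mul _)
      (iZ.const_mul _)]
    refine integral_mono ((iX.const_mul _).sub (iZ.const_mul _)) i1 fun x => ?_
    exact cacc_pt1 hp hδ0 _ _ (hc'0 x) (hη.nonneg x) (sD_nonneg _ _) (sD_eq_one hk)
      (hη.grad_ind hp x)
  have e2 : 0 ≤ ε * ∫ x, V x * |u x| ^ (p - 2) * u x * (sF k (u x) * η x) := by
    refine mul_nonneg hε (integral_nonneg_of_ae ?_)
    filter_upwards [hV0] with x hx
    have : V x * |u x| ^ (p - 2) * u x * (sF k (u x) * η x) =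
      V x * η x * (|u x| ^ (p - 2) * u x * sF k (u x)) := by ring
    rw [this, pair_sF hp hk]
    have := hη.nonneg x
    simp only [Pi.zero_apply]
    positivity
  have e3 : ∫ x, |u x| ^ (p - 2) * u x * (sF k (u x) * η x) =
      ∫ x, |u x| ^ (p - 1) * |sF k (u x)| * η x := by
    congr 1
    ext x
    rw [← mul_assoc, pair_sF hp hk]
  rw [e3] at heq
  set Y := ∫ x, |u x| ^ (p - 1) * |sF k (u x)| * η x
  have e4 : (1 - δ) * X ≤ lam * Y + δ ^ (1 - p) * Z := by linarith
  have e5 : ∫ x, ‖(sD k (u x) * η x) • g x + sF k (u x) • gradient η x‖ ^ p ≤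
      (1 + δ) * X + C * Z := by
    rw [hX, hZ, ← integral_const_mul, ← integral_const_mul, ← integral_add (iX.const_mul _)
      (iZ.const_mul _)]
    refine integral_mono (integrable_rpow hp hT.mg) ((iX.const_mul _).add (iZ.const_mul _))
      fun x => ?_
    exact cacc_pt2 hp hδ0 hC0 hC _ _ (hc'0 x) (hη.nonneg x) (hη.le_one x) (sD_nonneg _ _)
      (sD_le_one hk _) (hη.grad_ind hp x)
  refine e5.trans ?_
  have e6 : (1 + δ) * X ≤ (1 + τ) * (lam * Y + δ ^ (1 - p) * Z) := by
    rw [hfac, mul_assoc]; gcongr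
  have e7 : (c * κ) ^ p = c ^ p * κ ^ p := Real.mul_rpow hc.le hκ.le
  rw [e7] at vZ
  calc (1 + δ) * X + C * Z ≤ (1 + τ) * (lam * Y + δ ^ (1 - p) * Z) + C * Z := by linarith
    _ = (1 + τ) * (lam * Y) + ((1 + τ) * δ ^ (1 - p) + C) * Z := by ring
    _ = _ := by rw [vZ]; ring

end part7

section part8

variable {N : ℕ} {p : ℝ}

lemma sF_zero (t : ℝ) : sF 0 t = t := by simp [sF]

/-- Region outside a ball. -/
def outer (N : ℕ) (r : ℝ) : Set (EucN N) := {x | r < jb x}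

lemma measurableSet_outer (r : ℝ) : MeasurableSet (outer N r) :=
  (isOpen_lt continuous_const continuous_jb).measurableSet

lemma outer_mono {r s : ℝ} (h : r ≤ s) : outer N s ⊆ outer N r := fun _ hx => lt_of_le_of_lt h hx

lemma tail_decay (hp : 1 < p) {Λ L : ℝ} (hΛ : 0 ≤ Λ) (hL : Λ < L) :
    ∃ θ : ℝ, 0 < θ ∧ θ < 1 ∧ ∀ (N : ℕ) (Ω : Set (EucN N)) (V : EucN N → ℝ),
      LocallyIntegrable V volume → (∀ᵐ x, 0 ≤ V x) → ∀ (ε lam : ℝ), 0 ≤ ε → 0 ≤ lam → lam ≤ Λ →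
      ∀ w : SobTriple N (ENNReal.ofReal p), IsCriticalV N p hp.le Ω V ε lam w →
      ∀ R : ℝ, ENNReal.ofReal L ≤ lambda1p N p hp.le (Ω \ closure (ball (0 : EucN N) R)) →
      ∀ r : ℝ, 1 + R < r →
        ∫ x in outer N (r + 1), |w.1 x| ^ p ≤ θ * ∫ x in outer N r, |w.1 x| ^ p := by
  have hp0 : 0 < p := by linarith
  obtain ⟨c, hc, hcut⟩ := exists_cut hp
  obtain ⟨τ, hτ, hτ1⟩ : ∃ τ : ℝ, 0 < τ ∧ (1 + τ) * Λ < L := by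
    refine ⟨(L - Λ) / (2 * (Λ + 1)), div_pos (by linarith) (by linarith), ?_⟩
    have : (L - Λ) / (2 * (Λ + 1)) * Λ < L - Λ := by
      rw [div_mul_eq_mul_div, div_lt_iff₀ (by linarith)]
      nlinarith
    linarith
  obtain ⟨C, hC0, hC⟩ := caccioppoli hp hc hτ
  set β := L - (1 + τ) * Λ with hβ
  have hβ0 : 0 < β := by linarith
  set D := C + (1 + τ) * Λ + 1 with hD
  have hD0 : 0 < D := by positivity
  refine ⟨D / (β + D), by positivity, by rw [div_lt_one (by positivity)]; linarith, ?_⟩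
  intro N Ω V hV hV0 ε lam hε hlam0 hlam w hw R hR r hr
  obtain ⟨η, hη⟩ := hcut N r 1 one_pos
  have hcac := hC N Ω V hV hV0 ε lam hε w hw 0 le_rfl r 1 one_pos η hη
  obtain ⟨hA, -⟩ := W10V.appr hp hV hw.1
  have hsup : ∀ x ∈ Ω, x ∈ tsupport η → x ∈ Ω \ closure (ball (0 : EucN N) R) := by
    intro x hx hxs
    refine ⟨hx, fun hcl => ?_⟩
    have h1 := hη.supp x hxs
    have h2 : ‖x‖ ≤ R := by simpa using closure_ball_subset_closedBall hcl
    have h3 := jb_le x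
    linarith
  have hT := hη.appr hp hV hV0 hA le_rfl hc one_pos hsup
  have hpo := hT.poincare hp hV hV0 (by linarith : 0 ≤ L) hR
  simp only [sF_zero, Real.one_rpow, mul_one] at hcac hpo
  set u := w.1
  have iu : Integrable (fun x => |u x| ^ p) volume := integrable_rpow hp hA.mu
  set a0 := ∫ x in outer N r, |u x| ^ p with ha0
  set a1 := ∫ x in outer N (r + 1), |u x| ^ p with ha1
  have k1 : a1 ≤ ∫ x, |u x * η x| ^ p := by
    rw [ha1, ← integral_indicator (measurableSet_outer _)]
    refine integral_mono (iu.indicator (measurableSet_outer _)) ?_ fun x => ?_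
    · have := integrable_rpow hp hT.mu
      simpa only [sF_zero, Real.norm_eq_abs] using this
    · by_cases hx : x ∈ outer N (r + 1)
      · rw [indicator_of_mem hx, hη.one x (by simpa using (le_of_lt hx)), mul_one]
      · rw [indicator_of_notMem hx]; positivity
  have k2 : ∫ x, |u x| ^ (p - 1) * |u x| * η x ≤ a0 := by
    rw [ha0, ← integral_indicator (measurableSet_outer _)]
    have hpt : ∀ x, |u x| ^ (p - 1) * |u x| * η x ≤ (outer N r).indicator (fun x => |u x| ^ p) x := by
      intro x
      have e : |u x| ^ (p - 1) * |u x| = |u x| ^ p := by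
        rcases eq_or_ne (u x) 0 with h | h
        · simp [h, Real.zero_rpow hp0.ne']
        · rw [← Real.rpow_add_one (abs_pos.2 h).ne']; ring_nf
      rw [e]
      by_cases hx : x ∈ outer N r
      · rw [indicator_of_mem hx]
        have := hη.le_one x
        have h0 : 0 ≤ |u x| ^ p := by positivity
        nlinarith
      · rw [indicator_of_notMem hx, hη.zero x (not_lt.1 hx)]; simp
    refine integral_mono_of_nonneg (Eventually.of_forall fun x => ?_)
      (iu.indicator (measurableSet_outer _)) (Eventually.of_forall hpt)
    have := hη.nonneg x
    simp only [Pi.zero_apply]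
    positivity
  have k3 : (∫ x in ann N r 1, |u x| ^ p) + a1 ≤ a0 := by
    rw [ha0, ha1, ← setIntegral_union ?_ (measurableSet_outer _) iu.integrableOn iu.integrableOn]
    · refine setIntegral_mono_set iu.integrableOn (Eventually.of_forall fun x => by
        simp only [Pi.zero_apply]; positivity) (HasSubset.Subset.eventuallyLE ?_)
      rintro x (hx | hx)
      · exact hx.1
      · exact outer_mono (by linarith) hx
    · rw [Set.disjoint_left]
      intro x hx hx'
      have h1 : jb x < r + 1 / 1 := hx.2
      have h2 : r + 1 < jb x := hx'
      norm_num at h1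
      linarith
  have k4 : 0 ≤ ∫ x, |u x| ^ (p - 1) * |u x| * η x := integral_nonneg fun x => by
    have := hη.nonneg x
    positivity
  have k5 : (1 + τ) * (lam * ∫ x, |u x| ^ (p - 1) * |u x| * η x) ≤ (1 + τ) * (Λ * a0) := by gcongr
  have k6 : L * a1 ≤ L * ∫ x, |u x * η x| ^ p := by
    have : 0 ≤ L := by linarith
    gcongr
  have k7 : C * ∫ x in ann N r 1, |u x| ^ p ≤ C * (a0 - a1) := by gcongr; linarith
  have k8 : a1 ≤ a0 := by
    have : 0 ≤ ∫ x in ann N r 1, |u x| ^ p := integral_nonneg fun x => by positivity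
    linarith
  rw [div_mul_eq_mul_div, le_div_iff₀ (by positivity)]
  have k9 : L * a1 ≤ (1 + τ) * (Λ * a0) + C * (a0 - a1) := by linarith
  rw [hD, hβ]
  nlinarith

end part8

section part9

variable {N : ℕ} {p : ℝ}

lemma eLpNorm_prod_mul' {m : ℕ} {q : ℝ≥0∞} (hq0 : q ≠ 0) (hqt : q ≠ ⊤) {F : EucN N → ℝ}
    {G : EucN m → ℝ} (hF : Continuous F) (hG : Continuous G) :
    eLpNorm (fun z : EucN N × EucN m => F z.1 * G z.2) q
      ((volume : Measure (EucN N)).prod (volume : Measure (EucN m))) =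
      eLpNorm F q volume * eLpNorm G q volume := by
  rw [eLpNorm_eq_lintegral_rpow_enorm_toReal hq0 hqt, eLpNorm_eq_lintegral_rpow_enorm_toReal hq0 hqt,
    eLpNorm_eq_lintegral_rpow_enorm_toReal hq0 hqt, ← ENNReal.mul_rpow_of_nonneg _ _ (by positivity)]
  congr 1
  rw [← lintegral_prod_mul]
  · congr 1
    ext z
    rw [enorm_mul, ENNReal.mul_rpow_of_nonneg _ _ (by positivity)]
  · exact (hF.enorm.measurable.pow_const _).aemeasurable
  · exact (hG.enorm.measurable.pow_const _).aemeasurable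

lemma norm_gradient_eq (f : EucN N → ℝ) (x : EucN N) : ‖gradient f x‖ = ‖fderiv ℝ f x‖ := by
  rw [gradient, LinearIsometryEquiv.norm_map]

lemma sobolev_smooth (hp : 1 < p) (N : ℕ) : ∃ q : ℝ, p < q ∧ ∃ C : ℝ≥0∞, C ≠ ⊤ ∧
    ∀ f : EucN N → ℝ, ContDiff ℝ 1 f → HasCompactSupport f →
      eLpNorm f (ENNReal.ofReal q) volume ≤ C * (eLpNorm f (ENNReal.ofReal p) volume +
        eLpNorm (fun x => gradient f x) (ENNReal.ofReal p) volume) := by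
  have hp0 : 0 < p := by linarith
  obtain ⟨m0, hm0⟩ := exists_nat_ge p
  set m := m0 + 1 with hm
  set n := Module.finrank ℝ (EucN N × EucN m) with hn
  have hnv : n = N + m := by rw [hn]; simp
  have hnp : p < n := by
    rw [hnv, hm]; push_cast
    have : (0:ℝ) ≤ N := by positivity
    linarith
  have hn0 : (0:ℝ) < n := by linarith
  set q : ℝ := (p⁻¹ - (n:ℝ)⁻¹)⁻¹ with hq
  have hpos : 0 < p⁻¹ - (n:ℝ)⁻¹ := sub_pos.2 ((inv_lt_inv₀ hn0 hp0).2 hnp)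
  have hq0 : 0 < q := inv_pos.2 hpos
  have hpq : p < q := by
    rw [hq, lt_inv_comm₀ hp0 hpos]
    have : 0 < (n:ℝ)⁻¹ := by positivity
    linarith
  set χ : ContDiffBump (0 : EucN m) := ⟨1, 2, one_pos, one_lt_two⟩
  have hχ : ContDiff ℝ 1 (χ : EucN m → ℝ) := χ.contDiff
  have hχs : HasCompactSupport (χ : EucN m → ℝ) := χ.hasCompactSupport
  have hχd : Continuous (fun y => ‖fderiv ℝ (χ : EucN m → ℝ) y‖) :=
    (hχ.continuous_fderiv one_ne_zero).norm
  have ep0 := ofReal_p_ne_zero hp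
  have eq0 : ENNReal.ofReal q ≠ 0 := by simp; linarith
  set A := eLpNorm (χ : EucN m → ℝ) (ENNReal.ofReal q) volume with hA
  have hAt : A ≠ ⊤ := (hχ.continuous.memLp_of_hasCompactSupport hχs).2.ne
  have hA0 : A ≠ 0 := by
    rw [hA, Ne, eLpNorm_eq_zero_iff hχ.continuous.aestronglyMeasurable eq0]
    intro h
    have h2 : (χ : EucN m → ℝ) = fun _ => (0:ℝ) :=
      (hχ.continuous.ae_eq_iff_eq volume continuous_const).1 h
    have h3 : χ (0 : EucN m) = 1 := χ.one_of_mem_closedBall (by simp [χ])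
    rw [h2] at h3
    exact zero_ne_one h3
  set B1 := eLpNorm (χ : EucN m → ℝ) (ENNReal.ofReal p) volume
  set B2 := eLpNorm (fun y => ‖fderiv ℝ (χ : EucN m → ℝ) y‖) (ENNReal.ofReal p) volume
  have hB1 : B1 ≠ ⊤ := (hχ.continuous.memLp_of_hasCompactSupport hχs).2.ne
  have hB2 : B2 ≠ ⊤ := (hχd.memLp_of_hasCompactSupport (hχs.fderiv ℝ).norm).2.ne
  set μ := (volume : Measure (EucN N)).prod (volume : Measure (EucN m))
  set S : ℝ≥0∞ := ((SNormLESNormFDerivOfEqConst ℝ μ (p.toNNReal : ℝ) : NNReal) : ℝ≥0∞)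
  refine ⟨q, hpq, A⁻¹ * (S * (B1 + B2)), ?_, ?_⟩
  · refine ENNReal.mul_ne_top (by simpa using hA0) (ENNReal.mul_ne_top ENNReal.coe_ne_top ?_)
    exact ENNReal.add_ne_top.2 ⟨hB1, hB2⟩
  intro f hf hfs
  set U : EucN N × EucN m → ℝ := fun z => f z.1 * χ z.2 with hU
  have hUs : ContDiff ℝ 1 U := (hf.comp contDiff_fst).mul (hχ.comp contDiff_snd)
  have hUc : HasCompactSupport U := by
    refine HasCompactSupport.of_support_subset_isCompact (hfs.isCompact.prod hχs.isCompact) ?_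
    intro z hz
    have hz' : f z.1 * χ z.2 ≠ 0 := hz
    exact ⟨subset_tsupport _ (left_ne_zero_of_mul hz'), subset_tsupport _ (right_ne_zero_of_mul hz')⟩
  have key := eLpNorm_le_eLpNorm_fderiv_of_eq (F := ℝ) μ hUs hUc (p := p.toNNReal)
    (p' := q.toNNReal) (by simpa using hp.le) (by exact_mod_cast hn0)
    (by rw [NNReal.coe_inv, Real.coe_toNNReal _ hp0.le, Real.coe_toNNReal _ hq0.le, hq, inv_inv])
  have hL : eLpNorm U (q.toNNReal : ℝ≥0∞) μ = eLpNorm f (ENNReal.ofReal q) volume * A :=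
    eLpNorm_prod_mul' eq0 ENNReal.ofReal_ne_top hf.continuous hχ.continuous
  have hfd : Continuous (fun x => ‖fderiv ℝ f x‖) := (hf.continuous_fderiv one_ne_zero).norm
  have hder : ∀ z, ‖fderiv ℝ U z‖ ≤ ‖‖fderiv ℝ f z.1‖ * χ z.2 + ‖f z.1‖ * ‖fderiv ℝ (χ : EucN m → ℝ) z.2‖‖ := by
    intro z
    have d1 : HasFDerivAt (fun z : EucN N × EucN m => f z.1)
        ((fderiv ℝ f z.1).comp (ContinuousLinearMap.fst ℝ _ _)) z :=
      (hf.differentiable one_ne_zero z.1).hasFDerivAt.comp z hasFDerivAt_fst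
    have d2 : HasFDerivAt (fun z : EucN N × EucN m => χ z.2)
        ((fderiv ℝ (χ : EucN m → ℝ) z.2).comp (ContinuousLinearMap.snd ℝ _ _)) z :=
      (hχ.differentiable one_ne_zero z.2).hasFDerivAt.comp z hasFDerivAt_snd
    have d3 : fderiv ℝ U z = _ := (d1.mul d2).fderiv
    have hχ0 : 0 ≤ χ z.2 := χ.nonneg
    rw [d3]
    rw [Real.norm_of_nonneg (by positivity : 0 ≤ ‖fderiv ℝ f z.1‖ * χ z.2 + ‖f z.1‖ * ‖fderiv ℝ (χ : EucN m → ℝ) z.2‖)]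
    refine (norm_add_le _ _).trans ?_
    rw [norm_smul, norm_smul, Real.norm_of_nonneg hχ0, add_comm]
    have a1 : ‖(fderiv ℝ f z.1).comp (ContinuousLinearMap.fst ℝ (EucN N) (EucN m))‖ ≤ ‖fderiv ℝ f z.1‖ := by
      refine (ContinuousLinearMap.opNorm_comp_le _ _).trans ?_
      exact mul_le_of_le_one_right (norm_nonneg _) (ContinuousLinearMap.norm_fst_le _ _ _)
    have a2 : ‖(fderiv ℝ (χ : EucN m → ℝ) z.2).comp (ContinuousLinearMap.snd ℝ (EucN N) (EucN m))‖ ≤ ‖fderiv ℝ (χ : EucN m → ℝ) z.2‖ := by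
      refine (ContinuousLinearMap.opNorm_comp_le _ _).trans ?_
      exact mul_le_of_le_one_right (norm_nonneg _) (ContinuousLinearMap.norm_snd_le _ _ _)
    rw [mul_comm (‖fderiv ℝ f z.1‖)]
    gcongr
  have hR : eLpNorm (fderiv ℝ U) (p.toNNReal : ℝ≥0∞) μ ≤
      eLpNorm (fun x => gradient f x) (ENNReal.ofReal p) volume * B1 +
      eLpNorm f (ENNReal.ofReal p) volume * B2 := by
    refine (eLpNorm_mono hder).trans ?_
    refine (eLpNorm_add_le (f := fun z : EucN N × EucN m => ‖fderiv ℝ f z.1‖ * χ z.2)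
      (g := fun z => ‖f z.1‖ * ‖fderiv ℝ (χ : EucN m → ℝ) z.2‖) ?_ ?_ (ofReal_one_le hp)).trans ?_
    · exact ((hfd.comp continuous_fst).mul (hχ.continuous.comp continuous_snd)).aestronglyMeasurable
    · exact ((hf.continuous.norm.comp continuous_fst).mul (hχd.comp continuous_snd)).aestronglyMeasurable
    · have e1 := eLpNorm_prod_mul' (q := ENNReal.ofReal p) ep0 ENNReal.ofReal_ne_top hfd hχ.continuous
      have e2 := eLpNorm_prod_mul' (q := ENNReal.ofReal p) ep0 ENNReal.ofReal_ne_top hf.continuous.norm hχd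
      refine le_of_eq ?_
      refine (congrArg₂ (· + ·) e1 e2).trans ?_
      congr 2
      · refine eLpNorm_congr_norm_ae (Eventually.of_forall fun x => ?_)
        rw [norm_norm, norm_gradient_eq]
      · exact eLpNorm_norm f
  rw [hL] at key
  have k2 : eLpNorm f (ENNReal.ofReal q) volume * A ≤ S * ((B1 + B2) * (eLpNorm f (ENNReal.ofReal p) volume +
        eLpNorm (fun x => gradient f x) (ENNReal.ofReal p) volume)) := by
    refine key.trans ?_
    refine mul_le_mul_right (hR.trans ?_) _
    calc _ ≤ eLpNorm (fun x => gradient f x) (ENNReal.ofReal p) volume * (B1 + B2) +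
      eLpNorm f (ENNReal.ofReal p) volume * (B1 + B2) := by
          gcongr
          · exact le_self_add
          · exact le_add_self
      _ = _ := by ring
  calc eLpNorm f (ENNReal.ofReal q) volume = A⁻¹ * (eLpNorm f (ENNReal.ofReal q) volume * A) := by
        rw [mul_comm, mul_assoc, ENNReal.mul_inv_cancel hA0 hAt, mul_one]
    _ ≤ A⁻¹ * (S * ((B1 + B2) * (eLpNorm f (ENNReal.ofReal p) volume +
        eLpNorm (fun x => gradient f x) (ENNReal.ofReal p) volume))) := by gcongr
    _ = _ := by ring

lemma sobolev_appr (hp : 1 < p) (N : ℕ) : ∃ q : ℝ, p < q ∧ ∃ C : ℝ≥0∞, C ≠ ⊤ ∧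
    ∀ (Ω : Set (EucN N)) (V : EucN N → ℝ) (f : EucN N → ℝ) (g : EucN N → EucN N),
      Appr p Ω V f g →
      eLpNorm f (ENNReal.ofReal q) volume ≤ C * (eLpNorm f (ENNReal.ofReal p) volume +
        eLpNorm g (ENNReal.ofReal p) volume) := by
  obtain ⟨q, hpq, C, hC, hs⟩ := sobolev_smooth hp N
  refine ⟨q, hpq, C, hC, fun Ω V f g h => ?_⟩
  obtain ⟨ψ, hψ, h1, h2, -, h4⟩ := h.seq hp
  have hlim := Lp.eLpNorm_lim_le_liminf_eLpNorm (p := ENNReal.ofReal q)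
    (fun n => (hψ n).1.continuous.aestronglyMeasurable (μ := volume)) f h4
  refine hlim.trans ?_
  have hb : ∀ n, eLpNorm (ψ n) (ENNReal.ofReal q) volume ≤
      C * ((eLpNorm f (ENNReal.ofReal p) volume +
        eLpNorm (fun x => ψ n x - f x) (ENNReal.ofReal p) volume) +
        (eLpNorm g (ENNReal.ofReal p) volume +
        eLpNorm (fun x => gradient (ψ n) x - g x) (ENNReal.ofReal p) volume)) := by
    intro n
    refine (hs _ ((hψ n).1.of_le (by exact_mod_cast le_top)) (hψ n).2.1).trans ?_
    gcongr
    · have e : ψ n = f + fun x => ψ n x - f x := by ext x; simp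
      conv_lhs => rw [e]
      exact eLpNorm_add_le h.mu.1 (((hψ n).memLp (ENNReal.ofReal p)).1.sub h.mu.1) (ofReal_one_le hp)
    · have e : (fun x => gradient (ψ n) x) = g + fun x => gradient (ψ n) x - g x := by ext x; simp
      conv_lhs => rw [e]
      exact eLpNorm_add_le h.mg.1 (((hψ n).memLp_grad (ENNReal.ofReal p)).1.sub h.mg.1) (ofReal_one_le hp)
  have ht : Tendsto (fun n => C * ((eLpNorm f (ENNReal.ofReal p) volume +
        eLpNorm (fun x => ψ n x - f x) (ENNReal.ofReal p) volume) +
        (eLpNorm g (ENNReal.ofReal p) volume +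
        eLpNorm (fun x => gradient (ψ n) x - g x) (ENNReal.ofReal p) volume))) atTop
        (𝓝 (C * ((eLpNorm f (ENNReal.ofReal p) volume + 0) +
        (eLpNorm g (ENNReal.ofReal p) volume + 0)))) :=
    ENNReal.Tendsto.const_mul ((h1.const_add _).add (h2.const_add _)) (Or.inr hC)
  have := liminf_le_liminf (f := atTop) (Eventually.of_forall hb)
  rw [ht.liminf_eq, add_zero, add_zero] at this
  exact this

lemma eLpNorm_rpow_eq {E : Type*} [NormedAddCommGroup E] (hp : 1 < p) {a : EucN N → E}
    (ha : MemLp a (ENNReal.ofReal p) volume) :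
    eLpNorm a (ENNReal.ofReal p) volume = ENNReal.ofReal ((∫ x, ‖a x‖ ^ p) ^ (1 / p)) := by
  have h := ha.eLpNorm_eq_integral_rpow_norm (ofReal_p_ne_zero hp) ENNReal.ofReal_ne_top
  rw [ENNReal.toReal_ofReal (by linarith)] at h
  rw [h, one_div]

lemma sobolev_set (hp : 1 < p) (N : ℕ) : ∃ δ : ℝ, 0 < δ ∧ ∃ K : ℝ, 0 ≤ K ∧
    ∀ (Ω : Set (EucN N)) (V : EucN N → ℝ) (f : EucN N → ℝ) (g : EucN N → EucN N),
      Appr p Ω V f g → ∀ S : Set (EucN N), MeasurableSet S → (∀ x, x ∉ S → f x = 0) →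
      volume S ≠ ⊤ →
      ∫ x, |f x| ^ p ≤ K * ((∫ x, |f x| ^ p) + ∫ x, ‖g x‖ ^ p) * (volume S).toReal ^ δ := by
  have hp0 : 0 < p := by linarith
  obtain ⟨q, hpq, C, hC, hs⟩ := sobolev_appr hp N
  have hq0 : 0 < q := by linarith
  refine ⟨1 - p / q, by rw [sub_pos, div_lt_one hq0]; exact hpq, (C.toReal * 2) ^ p, by positivity, ?_⟩
  intro Ω V f g h S hS hf hSt
  have h1 := hs Ω V f g h
  have h2 : eLpNorm f (ENNReal.ofReal p) volume ≤
      eLpNorm f (ENNReal.ofReal q) volume * volume S ^ (1 / p - 1 / q) := by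
    have e : eLpNorm f (ENNReal.ofReal p) volume = eLpNorm f (ENNReal.ofReal p) (volume.restrict S) := by
      have : S.indicator f = f := by
        ext x
        by_cases hx : x ∈ S
        · rw [indicator_of_mem hx]
        · rw [indicator_of_notMem hx, hf x hx]
      conv_lhs => rw [← this]
      exact eLpNorm_indicator_eq_eLpNorm_restrict hS
    rw [e]
    have := eLpNorm_le_eLpNorm_mul_rpow_measure_univ (μ := volume.restrict S)
      (p := ENNReal.ofReal p) (q := ENNReal.ofReal q) (ENNReal.ofReal_le_ofReal hpq.le)
      (h.mu.1.mono_measure Measure.restrict_le_self)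
    rw [ENNReal.toReal_ofReal hp0.le, ENNReal.toReal_ofReal hq0.le, Measure.restrict_apply_univ] at this
    refine this.trans ?_
    exact mul_le_mul_left (eLpNorm_mono_measure f Measure.restrict_le_self) _
  have h3 := h2.trans (mul_le_mul_left h1 _)
  rw [eLpNorm_rpow_eq hp h.mu, eLpNorm_rpow_eq hp h.mg] at h3
  simp only [Real.norm_eq_abs] at h3
  set a := ∫ x, |f x| ^ p with ha
  set b := ∫ x, ‖g x‖ ^ p with hb
  have ha0 : 0 ≤ a := integral_nonneg fun x => by positivity
  have hb0 : 0 ≤ b := integral_nonneg fun x => by positivity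
  set v := (volume S).toReal with hv
  have hv0 : 0 ≤ v := ENNReal.toReal_nonneg
  have hvS : volume S = ENNReal.ofReal v := (ENNReal.ofReal_toReal hSt).symm
  have hCC : C = ENNReal.ofReal C.toReal := (ENNReal.ofReal_toReal hC).symm
  have hex : 0 ≤ 1 / p - 1 / q := by
    rw [sub_nonneg]; exact one_div_le_one_div_of_le hp0 hpq.le
  rw [hvS, ENNReal.ofReal_rpow_of_nonneg hv0 hex, hCC, ← ENNReal.ofReal_add (by positivity) (by positivity),
    ← ENNReal.ofReal_mul ENNReal.toReal_nonneg, ← ENNReal.ofReal_mul (by positivity),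
    ENNReal.ofReal_le_ofReal_iff (by positivity)] at h3
  have hC0 : 0 ≤ C.toReal := ENNReal.toReal_nonneg
  have h4 : a ^ (1 / p) + b ^ (1 / p) ≤ 2 * (a + b) ^ (1 / p) := by
    have e1 : a ^ (1 / p) ≤ (a + b) ^ (1 / p) := by gcongr; linarith
    have e2 : b ^ (1 / p) ≤ (a + b) ^ (1 / p) := by gcongr; linarith
    linarith
  have h5 : a ^ (1 / p) ≤ C.toReal * 2 * (a + b) ^ (1 / p) * v ^ (1 / p - 1 / q) := by
    refine h3.trans ?_
    rw [mul_assoc C.toReal 2]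
    gcongr
  have h6 : (a ^ (1 / p)) ^ p ≤ (C.toReal * 2 * (a + b) ^ (1 / p) * v ^ (1 / p - 1 / q)) ^ p := by
    gcongr
  rw [Real.mul_rpow (by positivity) (by positivity), Real.mul_rpow (by positivity) (by positivity),
    ← Real.rpow_mul ha0, ← Real.rpow_mul (by positivity), ← Real.rpow_mul hv0,
    one_div_mul_cancel hp0.ne', Real.rpow_one, Real.rpow_one] at h6
  have e : (1 / p - 1 / q) * p = 1 - p / q := by field_simp
  rwa [e] at h6

end part9

section part10

variable {N : ℕ} {p : ℝ}

lemma abs_sF_anti {k k' : ℝ} (hk : 0 ≤ k) (hkk : k ≤ k') (t : ℝ) : |sF k' t| ≤ |sF k t| := by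
  rw [abs_sF hk, abs_sF (hk.trans hkk)]
  exact max_le_max (by linarith) le_rfl

lemma integrable_sF (hp : 1 < p) {u : EucN N → ℝ} (hu : MemLp u (ENNReal.ofReal p) volume)
    {k : ℝ} (hk : 0 ≤ k) : Integrable (fun x => |sF k (u x)| ^ p) volume := by
  have iu : Integrable (fun x => |u x| ^ p) volume := integrable_rpow hp hu
  refine iu.mono' ?_ (Eventually.of_forall fun x => ?_)
  · exact (((continuous_sF k).comp_aestronglyMeasurable hu.1).norm.aemeasurable.pow_const
      p).aestronglyMeasurable
  · rw [Real.norm_of_nonneg (by positivity)]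
    have := abs_sF_le hk (u x)
    gcongr

lemma dg_step (hp : 1 < p) (N : ℕ) {Λ : ℝ} (hΛ : 0 ≤ Λ) : ∃ δ : ℝ, 0 < δ ∧ ∃ K : ℝ, 0 ≤ K ∧
    ∀ (Ω : Set (EucN N)) (V : EucN N → ℝ),
      LocallyIntegrable V volume → (∀ᵐ x, 0 ≤ V x) → ∀ (ε lam : ℝ), 0 ≤ ε → 0 ≤ lam → lam ≤ Λ →
      ∀ w : SobTriple N (ENNReal.ofReal p), IsCriticalV N p hp.le Ω V ε lam w →
      ∀ r k M κ k' : ℝ, 0 ≤ k → 0 < M → 1 ≤ κ → k' = k + M / κ →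
      (∀ t, k' ≤ t → t ≤ κ * (t - k)) →
      ∫ x in outer N (r + 1 / κ), |sF k' (w.1 x)| ^ p ≤
        K * κ ^ p * (∫ x in outer N r, |sF k (w.1 x)| ^ p) *
          (κ ^ p * (∫ x in outer N r, |sF k (w.1 x)| ^ p) / M ^ p) ^ δ := by
  have hp0 : 0 < p := by linarith
  obtain ⟨c, hc, hcut⟩ := exists_cut hp
  obtain ⟨C, hC0, hC⟩ := caccioppoli hp hc one_pos
  obtain ⟨δ, hδ, K, hK, hS⟩ := sobolev_set hp N
  refine ⟨δ, hδ, K * (1 + 2 * Λ + C), by positivity, ?_⟩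
  intro Ω V hV hV0 ε lam hε hlam0 hlam w hw r k M κ k' hk hM hκ1 hk' hkt
  have hκ : 0 < κ := by linarith
  have hκp : 1 ≤ κ ^ p := Real.one_le_rpow hκ1 hp0.le
  have hMκ : 0 < M / κ := by positivity
  have hkk : k ≤ k' := by linarith
  have hk'0 : 0 ≤ k' := by linarith
  obtain ⟨η, hη⟩ := hcut N r κ hκ
  have hcac := hC N Ω V hV hV0 ε lam hε w hw k' hk'0 r κ hκ η hη
  obtain ⟨hA, -⟩ := W10V.appr hp hV hw.1
  have hT := hη.appr hp hV hV0 hA hk'0 hc hκ (Ω' := Ω) (fun x hx _ => hx)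
  have hum : Measurable w.1 := (Lp.stronglyMeasurable w.1).measurable
  set u := w.1 with hu
  set S : Set (EucN N) := outer N r ∩ {x | k' < |u x|} with hSdef
  have hSm : MeasurableSet S :=
    (measurableSet_outer r).inter (measurableSet_lt measurable_const hum.abs)
  have hf0 : ∀ x, x ∉ S → sF k' (u x) * η x = 0 := by
    intro x hx
    by_cases h1 : x ∈ outer N r
    · have h2 : |u x| ≤ k' := by
        by_contra hcon
        exact hx ⟨h1, not_le.1 hcon⟩
      have h3 := abs_sF hk'0 (u x)
      rw [max_eq_right (by linarith)] at h3
      rw [abs_eq_zero.1 h3, zero_mul]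
    · rw [hη.zero x (not_lt.1 h1), mul_zero]
  have is : Integrable (fun x => |sF k (u x)| ^ p) volume := integrable_sF hp hA.mu hk
  have is' : Integrable (fun x => |sF k' (u x)| ^ p) volume := integrable_sF hp hA.mu hk'0
  set A := ∫ x in outer N r, |sF k (u x)| ^ p with hAdef
  have hA0 : 0 ≤ A := integral_nonneg fun x => by positivity
  -- measure of S
  have hSub : ∀ x ∈ S, (M / κ) ^ p ≤ |sF k (u x)| ^ p := by
    intro x hx
    have h1 : k' < |u x| := hx.2
    have : M / κ ≤ |sF k (u x)| := by
      rw [abs_sF hk]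
      exact le_trans (by linarith) (le_max_left _ _)
    gcongr
  have hSt : volume S ≠ ⊤ := by
    have h1 : S ⊆ {x | (M / κ) ^ p ≤ |sF k (u x)| ^ p} := fun x hx => hSub x hx
    have h2 := is.measure_norm_ge_lt_top (ε := (M / κ) ^ p) (by positivity)
    refine (lt_of_le_of_lt (measure_mono fun x hx => ?_) h2).ne
    have := h1 hx
    rw [Set.mem_ofPred_eq] at this ⊢
    rwa [Real.norm_of_nonneg (by positivity)]
  have hvol : (volume S).toReal ≤ κ ^ p * A / M ^ p := by
    have h1 : ∫ x in S, (M / κ) ^ p ≤ A := by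
      refine le_trans (setIntegral_mono_on (integrableOn_const hSt) is.integrableOn hSm hSub) ?_
      exact setIntegral_mono_set is.integrableOn (Eventually.of_forall fun x => by
        simp only [Pi.zero_apply]; positivity)
        (HasSubset.Subset.eventuallyLE Set.inter_subset_left)
    rw [setIntegral_const, smul_eq_mul, Real.div_rpow hM.le hκ.le] at h1
    have h2 : (volume.real S) = (volume S).toReal := rfl
    rw [h2] at h1
    have hMp : 0 < M ^ p := by positivity
    have hκp' : 0 < κ ^ p := by positivity
    rw [le_div_iff₀ hMp]
    rw [mul_div_assoc', div_le_iff₀ hκp'] at h1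
    linarith
  -- estimates
  have k1 : ∫ x in outer N (r + 1 / κ), |sF k' (u x)| ^ p ≤ ∫ x, |sF k' (u x) * η x| ^ p := by
    rw [← integral_indicator (measurableSet_outer _)]
    refine integral_mono (is'.indicator (measurableSet_outer _)) (integrable_rpow hp hT.mu) fun x => ?_
    by_cases hx : x ∈ outer N (r + 1 / κ)
    · rw [indicator_of_mem hx, hη.one x (le_of_lt hx), mul_one]
    · rw [indicator_of_notMem hx]; positivity
  have k2 : ∫ x, |sF k' (u x) * η x| ^ p ≤ A := by
    rw [hAdef, ← integral_indicator (measurableSet_outer _)]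
    refine integral_mono (integrable_rpow hp hT.mu) (is.indicator (measurableSet_outer _)) fun x => ?_
    change |sF k' (u x) * η x| ^ p ≤ _
    by_cases hx : x ∈ outer N r
    · rw [indicator_of_mem hx, abs_mul, abs_of_nonneg (hη.nonneg x)]
      have h1 := abs_sF_anti hk hkk (u x)
      have h2 := hη.le_one x
      have h3 := hη.nonneg x
      have : |sF k' (u x)| * η x ≤ |sF k (u x)| := by
        nlinarith [abs_nonneg (sF k' (u x))]
      gcongr
    · rw [indicator_of_notMem hx, hη.zero x (not_lt.1 hx), mul_zero, abs_zero, Real.zero_rpow hp0.ne']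
  have k3 : ∫ x, |u x| ^ (p - 1) * |sF k' (u x)| * η x ≤ κ ^ p * A := by
    rw [hAdef, ← integral_indicator (measurableSet_outer _), ← integral_const_mul]
    refine integral_mono_of_nonneg (Eventually.of_forall fun x => ?_)
      ((is.indicator (measurableSet_outer _)).const_mul _) (Eventually.of_forall fun x => ?_)
    · have := hη.nonneg x
      simp only [Pi.zero_apply]
      positivity
    · dsimp only
      by_cases hx : x ∈ S
      · have hx1 : x ∈ outer N r := hx.1
        have hx2 : k' < |u x| := hx.2
        rw [indicator_of_mem hx1]
        have h1 : |u x| ≤ κ * |sF k (u x)| := by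
          refine (hkt _ hx2.le).trans ?_
          rw [abs_sF hk]
          gcongr
          exact le_max_left _ _
        have hpos : 0 < |u x| := by linarith
        calc |u x| ^ (p - 1) * |sF k' (u x)| * η x ≤ |u x| ^ (p - 1) * |u x| * 1 := by
              have h6 := hη.nonneg x
              have h7 := abs_sF_le hk'0 (u x)
              have h8 := hη.le_one x
              gcongr
          _ = |u x| ^ p := by rw [mul_one, ← Real.rpow_add_one hpos.ne']; ring_nf
          _ ≤ (κ * |sF k (u x)|) ^ p := by gcongr
          _ = _ := Real.mul_rpow hκ.le (abs_nonneg _)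
      · have h1 := hf0 x hx
        have h2 : |u x| ^ (p - 1) * |sF k' (u x)| * η x = 0 := by
          rcases mul_eq_zero.1 h1 with h | h
          · simp [h]
          · simp [h]
        rw [h2]
        exact mul_nonneg (by positivity) (indicator_nonneg (fun _ _ => by positivity) _)
  have k4 : ∫ x in ann N r κ, |sF k' (u x)| ^ p ≤ A := by
    refine le_trans (setIntegral_mono is'.integrableOn is.integrableOn fun x => ?_)
      (setIntegral_mono_set is.integrableOn (Eventually.of_forall fun x => by
        simp only [Pi.zero_apply]; positivity)
        (HasSubset.Subset.eventuallyLE fun x hx => hx.1))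
    have := abs_sF_anti hk hkk (u x)
    dsimp only
    gcongr
  have k5 : 0 ≤ ∫ x, |u x| ^ (p - 1) * |sF k' (u x)| * η x := integral_nonneg fun x => by
    have := hη.nonneg x
    positivity
  have k6 : ∫ x, ‖(sD k' (u x) * η x) • w.2.1 x + sF k' (u x) • gradient η x‖ ^ p ≤
      (2 * Λ + C) * κ ^ p * A := by
    refine hcac.trans ?_
    have e1 : (1 + 1) * (lam * ∫ x, |u x| ^ (p - 1) * |sF k' (u x)| * η x) ≤ (1 + 1) * (Λ * (κ ^ p * A)) := by
      gcongr
    have e2 : C * κ ^ p * ∫ x in ann N r κ, |sF k' (u x)| ^ p ≤ C * κ ^ p * A := by gcongr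
    linarith
  have k7 := hS Ω V _ _ hT S hSm hf0 hSt
  have hκA : A ≤ κ ^ p * A := by nlinarith
  calc _ ≤ _ := k1
    _ ≤ _ := k7
    _ ≤ K * ((1 + 2 * Λ + C) * κ ^ p * A) * (κ ^ p * A / M ^ p) ^ δ := by
      gcongr
      linarith
    _ = _ := by ring

lemma dg_seq {A : ℕ → ℝ} {δ K B Mp : ℝ} (hA : ∀ j, 0 ≤ A j) (hδ : 0 < δ) (hK : 0 < K) (hB : 1 < B)
    (hMp : 0 < Mp) (hM : (K * B * B ^ (1 / δ)) ^ (1 / δ) * A 0 ≤ Mp)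
    (hstep : ∀ j, A (j + 1) ≤ K * B ^ (j + 1) * A j * (A j / Mp) ^ δ) :
    Tendsto A atTop (𝓝 0) := by
  have hB0 : 0 < B := by linarith
  set τ := (B ^ (1 / δ))⁻¹ with hτ
  have hτ0 : 0 < τ := by positivity
  have hτδ : τ ^ δ = B⁻¹ := by
    rw [hτ, Real.inv_rpow (by positivity), ← Real.rpow_mul hB0.le, one_div_mul_cancel hδ.ne',
      Real.rpow_one]
  have hτ1 : τ < 1 := inv_lt_one_of_one_lt₀ (Real.one_lt_rpow hB (by positivity))
  have key : ∀ j, A j ≤ A 0 * τ ^ j := by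
    intro j
    induction j with
    | zero => simp
    | succ j ih =>
      have hA0 := hA 0
      have h1 : A 0 / Mp ≤ ((K * B * B ^ (1 / δ)) ^ (1 / δ))⁻¹ := by
        rw [div_le_iff₀ hMp, inv_mul_eq_div, le_div_iff₀ (by positivity)]
        linarith
      have h2 : (A 0 / Mp) ^ δ ≤ (K * B)⁻¹ * τ := by
        calc (A 0 / Mp) ^ δ ≤ (((K * B * B ^ (1 / δ)) ^ (1 / δ))⁻¹) ^ δ := by gcongr
          _ = (K * B)⁻¹ * τ := by
            rw [Real.inv_rpow (by positivity), ← Real.rpow_mul (by positivity),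
              one_div_mul_cancel hδ.ne', Real.rpow_one, mul_inv]
      have h3 : (A j / Mp) ^ δ ≤ (K * B)⁻¹ * τ * (B⁻¹) ^ j := by
        calc (A j / Mp) ^ δ ≤ (A 0 * τ ^ j / Mp) ^ δ := by
              have := hA j
              gcongr
          _ = (A 0 / Mp) ^ δ * (τ ^ j) ^ δ := by
            rw [← Real.mul_rpow (by positivity) (by positivity)]; ring_nf
          _ = (A 0 / Mp) ^ δ * (B⁻¹) ^ j := by
            rw [← hτδ, ← Real.rpow_natCast, ← Real.rpow_natCast, ← Real.rpow_mul hτ0.le,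
              ← Real.rpow_mul hτ0.le, mul_comm (j:ℝ) δ]
          _ ≤ _ := by gcongr
      calc A (j + 1) ≤ K * B ^ (j + 1) * A j * (A j / Mp) ^ δ := hstep j
        _ ≤ K * B ^ (j + 1) * (A 0 * τ ^ j) * ((K * B)⁻¹ * τ * (B⁻¹) ^ j) := by
          have := hA j
          gcongr
        _ = A 0 * τ ^ (j + 1) := by
          have e1 : B ^ j * (B⁻¹) ^ j = 1 := by
            rw [← mul_pow, mul_inv_cancel₀ hB0.ne', one_pow]
          have e2 : (K * B) * (K * B)⁻¹ = 1 := mul_inv_cancel₀ (by positivity)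
          calc _ = (B ^ j * (B⁻¹) ^ j) * ((K * B) * (K * B)⁻¹) * (A 0 * τ ^ (j + 1)) := by ring
            _ = _ := by rw [e1, e2]; ring
  refine squeeze_zero hA key ?_
  have := (tendsto_pow_atTop_nhds_zero_of_lt_one hτ0.le hτ1).const_mul (A 0)
  simpa using this

lemma de_giorgi (hp : 1 < p) (N : ℕ) {Λ : ℝ} (hΛ : 0 ≤ Λ) : ∃ H : ℝ, 0 < H ∧
    ∀ (Ω : Set (EucN N)) (V : EucN N → ℝ),
      LocallyIntegrable V volume → (∀ᵐ x, 0 ≤ V x) → ∀ (ε lam : ℝ), 0 ≤ ε → 0 ≤ lam → lam ≤ Λ →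
      ∀ w : SobTriple N (ENNReal.ofReal p), IsCriticalV N p hp.le Ω V ε lam w →
      ∀ r M : ℝ, 0 < M → H * ∫ x in outer N r, |w.1 x| ^ p ≤ M ^ p →
      ∀ᵐ x, x ∈ outer N (r + 1) → |w.1 x| ≤ M := by
  have hp0 : 0 < p := by linarith
  obtain ⟨δ, hδ, K, hK, hstep⟩ := dg_step hp N hΛ
  set B : ℝ := 2 ^ (p * (1 + δ)) with hB
  have hB1 : 1 < B := Real.one_lt_rpow (by norm_num) (by positivity)
  refine ⟨((K + 1) * B * B ^ (1 / δ)) ^ (1 / δ), by positivity, ?_⟩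
  intro Ω V hV hV0 ε lam hε hlam0 hlam w hw r M hM hH
  obtain ⟨hA, -⟩ := W10V.appr hp hV hw.1
  set u := w.1 with hu
  set kk : ℕ → ℝ := fun j => M * (1 - (1 / 2) ^ j) with hkk
  have hkk0 : ∀ j, 0 ≤ kk j := fun j =>
    mul_nonneg hM.le (sub_nonneg.2 (pow_le_one₀ (by norm_num) (by norm_num)))
  have hkkM : ∀ j, kk j ≤ M := fun j => by
    have : (0:ℝ) ≤ (1 / 2) ^ j := by positivity
    simp only [hkk]; nlinarith
  set A : ℕ → ℝ := fun j => ∫ x in outer N (r + 1 - (1 / 2) ^ j), |sF (kk j) (u x)| ^ p with hAd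
  have hA0 : ∀ j, 0 ≤ A j := fun j => integral_nonneg fun x => by positivity
  have hAz : A 0 = ∫ x in outer N r, |u x| ^ p := by
    simp only [hAd, hkk, pow_zero, sub_self, mul_zero, sF_zero, add_sub_cancel_right]
  have hst : ∀ j, A (j + 1) ≤ (K + 1) * B ^ (j + 1) * A j * (A j / M ^ p) ^ δ := by
    intro j
    have hκ1 : (1:ℝ) ≤ 2 ^ (j + 1) := one_le_pow₀ (by norm_num)
    have hκ0 : (0:ℝ) < 2 ^ (j + 1) := by positivity
    have hinv : ((1:ℝ) / 2) ^ j = 2 * (1 / 2 ^ (j + 1)) := by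
      rw [pow_succ, div_pow, one_pow]; field_simp
    have hinv2 : ((1:ℝ) / 2) ^ (j + 1) = 1 / 2 ^ (j + 1) := by
      rw [div_pow, one_pow]
    have h := hstep Ω V hV hV0 ε lam hε hlam0 hlam w hw (r + 1 - (1 / 2) ^ j) (kk j) M (2 ^ (j + 1))
      (kk (j + 1)) (hkk0 j) hM hκ1 ?_ ?_
    · have e1 : r + 1 - (1 / 2) ^ j + 1 / 2 ^ (j + 1) = r + 1 - (1 / 2) ^ (j + 1) := by
        rw [hinv, hinv2]; ring
      rw [e1] at h
      change A (j + 1) ≤ K * ((2:ℝ) ^ (j + 1)) ^ p * A j * (((2:ℝ) ^ (j + 1)) ^ p * A j / M ^ p) ^ δ at h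
      refine h.trans ?_
      have hAj := hA0 j
      have e2 : B ^ (j + 1) = ((2:ℝ) ^ (j + 1)) ^ p * (((2:ℝ) ^ (j + 1)) ^ p) ^ δ := by
        rw [hB, ← Real.rpow_natCast, ← Real.rpow_natCast, ← Real.rpow_mul (by norm_num),
          ← Real.rpow_mul (by norm_num), ← Real.rpow_mul (by norm_num), ← Real.rpow_add (by norm_num)]
        congr 1; ring
      rw [mul_div_assoc, Real.mul_rpow (by positivity) (by positivity), e2]
      have h9 : 0 ≤ ((2:ℝ) ^ (j + 1)) ^ p * (((2:ℝ) ^ (j + 1)) ^ p) ^ δ * A j * (A j / M ^ p) ^ δ := by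
        positivity
      nlinarith
    · simp only [hkk]; rw [hinv, hinv2]; ring
    · intro t ht
      simp only [hkk] at ht ⊢
      rw [hinv2] at ht
      rw [hinv]
      set s := (2:ℝ) ^ (j + 1)
      have h1 : s * (1 / s) = 1 := by field_simp
      have h2 : 0 < 1 / s := by positivity
      have h3 : 1 / s ≤ 1 := by rw [div_le_one hκ0]; exact hκ1
      have h4 : s * (t - M * (1 - 2 * (1 / s))) - t = (s - 1) * (t - M * (1 - 1 / s)) + M * (1 / s) := by
        linear_combination (M + 0) * h1
      have h5 : 0 ≤ (s - 1) * (t - M * (1 - 1 / s)) := mul_nonneg (by linarith) (by linarith)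
      have h6 : 0 ≤ M * (1 / s) := by positivity
      linarith
  have hlim := dg_seq hA0 hδ (by linarith : 0 < K + 1) hB1 (by positivity : 0 < M ^ p)
    (by rw [hAz]; exact hH) hst
  have iM := integrable_sF hp hA.mu hM.le
  have hle : ∀ j, ∫ x in outer N (r + 1), |sF M (u x)| ^ p ≤ A j := by
    intro j
    have ij := integrable_sF hp hA.mu (hkk0 j)
    refine le_trans (setIntegral_mono iM.integrableOn ij.integrableOn fun x => ?_)
      (setIntegral_mono_set ij.integrableOn (Eventually.of_forall fun x => by
        simp only [Pi.zero_apply]; positivity)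
        (HasSubset.Subset.eventuallyLE (outer_mono ?_)))
    · have := abs_sF_anti (hkk0 j) (hkkM j) (u x)
      dsimp only
      gcongr
    · have : (0:ℝ) ≤ (1 / 2) ^ j := by positivity
      linarith
  have hz : ∫ x in outer N (r + 1), |sF M (u x)| ^ p = 0 :=
    le_antisymm (ge_of_tendsto' hlim hle) (integral_nonneg fun x => by positivity)
  rw [integral_eq_zero_iff_of_nonneg (fun x => by simp only [Pi.zero_apply]; positivity) iM.integrableOn] at hz
  have hz2 := (ae_restrict_iff' (measurableSet_outer (N := N) (r + 1))).1 hz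
  filter_upwards [hz2] with x hx hxo
  have h1 := hx hxo
  simp only [Pi.zero_apply] at h1
  rw [Real.rpow_eq_zero (abs_nonneg _) hp0.ne', abs_sF hM.le] at h1
  have := le_max_left (|u x| - M) 0
  linarith

end part10

section part11

variable {N : ℕ} {p : ℝ}

lemma odd_lift {X Y : Type*} [NormedAddCommGroup X] [NormedSpace ℝ X] [NormedAddCommGroup Y]
    [NormedSpace ℝ Y] (P : Y →L[ℝ] X) (D : Submodule ℝ Y) {K : Set X} (hK : IsCompact K)
    (hsym : ∀ w ∈ K, -w ∈ K) (hD : K ⊆ closure (P '' D)) {δ : ℝ} (hδ : 0 < δ) :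
    ∃ T : X → Y, ContinuousOn T K ∧ (∀ w, T (-w) = -T w) ∧ (∀ w, T w ∈ D) ∧
      ∀ w ∈ K, ‖P (T w) - w‖ ≤ δ := by
  classical
  obtain ⟨s, hs⟩ := hK.elim_finite_subcover (fun t : D => ball (P t) δ) (fun t => isOpen_ball) (by
    intro w hw
    obtain ⟨_, ⟨t, ht, rfl⟩, hd⟩ := Metric.mem_closure_iff.1 (hD hw) δ hδ
    exact mem_iUnion.2 ⟨⟨t, ht⟩, hd⟩)
  set ρ : D → X → ℝ := fun t w => max 0 (δ - ‖w - P t‖) with hρ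
  have hρc : ∀ t, Continuous (ρ t) := fun t => by simp only [hρ]; fun_prop
  have hρ0 : ∀ t w, 0 ≤ ρ t w := fun t w => le_max_left _ _
  set σ : X → ℝ := fun w => ∑ t ∈ s, ρ t w with hσ
  have hσc : Continuous σ := continuous_finsetSum _ fun t _ => hρc t
  have hσpos : ∀ w ∈ K, 0 < σ w := by
    intro w hw
    obtain ⟨t, ht⟩ := mem_iUnion.1 (hs hw)
    obtain ⟨hts, ht⟩ := mem_iUnion.1 ht
    rw [mem_ball, dist_eq_norm] at ht
    exact Finset.sum_pos' (fun t _ => hρ0 t w) ⟨t, hts, lt_max_of_lt_right (by linarith)⟩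
  set Q : X → Y := fun w => (σ w)⁻¹ • ∑ t ∈ s, ρ t w • (t : Y) with hQ
  have hQc : ContinuousOn Q K := by
    refine ContinuousOn.smul (hσc.continuousOn.inv₀ fun w hw => (hσpos w hw).ne') ?_
    exact (continuous_finsetSum _ fun t _ => (hρc t).smul continuous_const).continuousOn
  have hQD : ∀ w, Q w ∈ D := fun w =>
    D.smul_mem _ (D.sum_mem fun t _ => D.smul_mem _ t.2)
  have hQn : ∀ w ∈ K, ‖P (Q w) - w‖ ≤ δ := by
    intro w hw
    have h0 := hσpos w hw
    have e1 : P (Q w) - w = (σ w)⁻¹ • ∑ t ∈ s, ρ t w • (P t - w) := by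
      simp only [hQ, map_smul, map_sum, smul_sub, Finset.sum_sub_distrib, ← Finset.sum_smul]
      congr 1
      change w = (σ w)⁻¹ • (σ w • w)
      rw [smul_smul, inv_mul_cancel₀ h0.ne', one_smul]
    rw [e1, norm_smul, norm_inv, Real.norm_of_nonneg h0.le, inv_mul_le_iff₀ h0]
    refine (norm_sum_le _ _).trans ?_
    simp only [hσ]
    rw [Finset.sum_mul]
    refine Finset.sum_le_sum fun t _ => ?_
    rw [norm_smul, Real.norm_of_nonneg (hρ0 t w)]
    by_cases h : ‖w - P t‖ ≤ δ
    · rw [norm_sub_rev]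
      exact mul_le_mul_of_nonneg_left h (hρ0 t w)
    · have : ρ t w = 0 := max_eq_left (by linarith)
      rw [this]; simp
  refine ⟨fun w => (1 / 2 : ℝ) • (Q w - Q (-w)), ?_, ?_, ?_, ?_⟩
  · refine (hQc.sub (hQc.comp continuous_neg.continuousOn fun w hw => hsym w hw)).const_smul _
  · intro w
    dsimp only
    rw [neg_neg, ← smul_neg, neg_sub]
  · intro w
    exact D.smul_mem _ (D.sub_mem (hQD _) (hQD _))
  · intro w hw
    have h1 := hQn w hw
    have h2 := hQn (-w) (hsym w hw)
    have e : P ((1 / 2 : ℝ) • (Q w - Q (-w))) - w =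
        (1 / 2 : ℝ) • ((P (Q w) - w) - (P (Q (-w)) - (-w))) := by
      rw [map_smul, map_sub]; module
    dsimp only
    rw [e, norm_smul]
    have h3 := norm_sub_le (P (Q w) - w) (P (Q (-w)) - (-w))
    rw [Real.norm_of_nonneg (by norm_num)]
    linarith

lemma isTestTriple_zero (q : ℝ≥0∞) (p : ℝ) (Ω : Set (EucN N)) (V : EucN N → ℝ) :
    IsTestTriple q p Ω V (0 : SobTriple N q) := by
  refine ⟨fun _ => 0, ⟨contDiff_const, ?_, ?_⟩, ?_, ?_, ?_⟩
  · exact HasCompactSupport.zero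
  · have : tsupport (fun _ : EucN N => (0:ℝ)) = ∅ := tsupport_eq_empty_iff.2 rfl
    rw [this]; exact empty_subset _
  · exact Lp.coeFn_zero _ _ _
  · refine (Lp.coeFn_zero _ _ _).trans (Eventually.of_forall fun x => ?_)
    simp [gradient]
  · refine (Lp.coeFn_zero _ _ _).trans (Eventually.of_forall fun x => ?_)
    simp

lemma isTestTriple_add {q : ℝ≥0∞} {p : ℝ} {Ω : Set (EucN N)} {V : EucN N → ℝ}
    {a b : SobTriple N q} (ha : IsTestTriple q p Ω V a) (hb : IsTestTriple q p Ω V b) :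
    IsTestTriple q p Ω V (a + b) := by
  obtain ⟨φ, hφ, h1, h2, h3⟩ := ha
  obtain ⟨ψ, hψ, h4, h5, h6⟩ := hb
  refine ⟨fun x => φ x + ψ x, ⟨hφ.1.add hψ.1, hφ.2.1.add hψ.2.1, ?_⟩, ?_, ?_, ?_⟩
  · exact (tsupport_add φ ψ).trans (union_subset hφ.2.2 hψ.2.2)
  · refine (Lp.coeFn_add _ _).trans ?_
    filter_upwards [h1, h4] with x e1 e2
    rw [Pi.add_apply, e1, e2]
  · refine (Lp.coeFn_add _ _).trans ?_
    filter_upwards [h2, h5] with x e1 e2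
    have d1 : DifferentiableAt ℝ φ x := hφ.1.contDiffAt.differentiableAt (by simp)
    have d2 : DifferentiableAt ℝ ψ x := hψ.1.contDiffAt.differentiableAt (by simp)
    rw [Pi.add_apply, e1, e2]
    simp only [gradient]
    rw [fderiv_fun_add d1 d2, map_add]
  · refine (Lp.coeFn_add _ _).trans ?_
    filter_upwards [h3, h6] with x e1 e2
    rw [Pi.add_apply, e1, e2]; ring

lemma isTestTriple_smul {q : ℝ≥0∞} {p : ℝ} {Ω : Set (EucN N)} {V : EucN N → ℝ} (c : ℝ)
    {a : SobTriple N q} (ha : IsTestTriple q p Ω V a) :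
    IsTestTriple q p Ω V (c • a) := by
  obtain ⟨φ, hφ, h1, h2, h3⟩ := ha
  refine ⟨fun x => c * φ x, ⟨contDiff_const.mul hφ.1, hφ.2.1.mul_left, ?_⟩, ?_, ?_, ?_⟩
  · exact (tsupport_mul_subset_right (f := fun _ => c) (g := φ)).trans hφ.2.2
  · refine (Lp.coeFn_smul _ _).trans ?_
    filter_upwards [h1] with x e1
    rw [Pi.smul_apply, e1, smul_eq_mul]
  · refine (Lp.coeFn_smul _ _).trans ?_
    filter_upwards [h2] with x e1
    have d1 : DifferentiableAt ℝ φ x := hφ.1.contDiffAt.differentiableAt (by simp)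
    rw [Pi.smul_apply, e1]
    simp only [gradient]
    rw [fderiv_const_mul d1]; simp
  · refine (Lp.coeFn_smul _ _).trans ?_
    filter_upwards [h3] with x e1
    rw [Pi.smul_apply, e1, smul_eq_mul]; ring

def testSub (N : ℕ) (q : ℝ≥0∞) (p : ℝ) (Ω : Set (EucN N)) (V : EucN N → ℝ) :
    Submodule ℝ (SobTriple N q) where
  carrier := {w | IsTestTriple q p Ω V w}
  add_mem' := fun ha hb => isTestTriple_add ha hb
  zero_mem' := isTestTriple_zero q p Ω V
  smul_mem' := fun c _ ha => isTestTriple_smul c ha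

lemma Lp_int_eq {F : Type*} [NormedAddCommGroup F] (hp : 1 < p) [Fact (1 ≤ ENNReal.ofReal p)]
    (a : Lp F (ENNReal.ofReal p) (volume : Measure (EucN N))) : ∫ x, ‖a x‖ ^ p = ‖a‖ ^ p := by
  have hp0 : 0 < p := by linarith
  have h0 : 0 ≤ ∫ x, ‖a x‖ ^ p := integral_nonneg fun x => by positivity
  rw [Lp.norm_def, eLpNorm_rpow_eq hp (Lp.memLp a), ENNReal.toReal_ofReal (by positivity),
    ← Real.rpow_mul h0, one_div_mul_cancel hp0.ne', Real.rpow_one]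

lemma minmax (hp : 1 < p) {Ω : Set (EucN N)} {V : EucN N → ℝ} (hV : LocallyIntegrable V volume)
    (hV0 : ∀ᵐ x, 0 ≤ V x) {k : ℕ} {K : Set (SobPair N (ENNReal.ofReal p))}
    (hK : K ∈ SobClass N p hp.le Ω k) {Λ₁ Λ : ℝ} (hΛ₁ : 0 ≤ Λ₁) (hΛ : Λ₁ < Λ)
    (hsup : ∀ w ∈ K, ∫ x, ‖w.2 x‖ ^ p ≤ Λ₁) :
    ∃ c B : ℝ, c < Λ ∧ ∀ ε : ℝ, 0 ≤ ε → ∀ ℓ, ℓ ≤ k →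
      lambdaLSV N p hp.le Ω V ε ℓ ≤ ENNReal.ofReal (c + ε * B) := by
  have hp0 : 0 < p := by linarith
  haveI := fact_one_le_ofReal hp.le
  obtain ⟨hKW, hK1, hKs, hKc, hKg⟩ := hK
  set m : ℝ := Λ₁ ^ (1 / p) with hm
  have hm0 : 0 ≤ m := by positivity
  have hmp : m ^ p = Λ₁ := by
    rw [hm, ← Real.rpow_mul hΛ₁, one_div_mul_cancel hp0.ne', Real.rpow_one]
  obtain ⟨δ, hδ0, hδ1, hδ⟩ : ∃ δ : ℝ, 0 < δ ∧ δ < 1 ∧ ((m + δ) / (1 - δ)) ^ p < Λ := by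
    have hc : ContinuousAt (fun δ : ℝ => ((m + δ) / (1 - δ)) ^ p) 0 := by
      refine ContinuousAt.rpow_const (ContinuousAt.div (by fun_prop) (by fun_prop) (by norm_num)) (Or.inr hp0.le)
    have h1 : ∀ᶠ δ in 𝓝 (0:ℝ), ((m + δ) / (1 - δ)) ^ p < Λ :=
      hc.eventually_lt continuousAt_const (by simpa [hmp] using hΛ)
    have h2 : ∀ᶠ δ in 𝓝 (0:ℝ), δ < 1 := eventually_lt_nhds one_pos
    obtain ⟨δ, h⟩ := (((h1.and h2).filter_mono nhdsWithin_le_nhds).and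
      (self_mem_nhdsWithin : Ioi (0:ℝ) ∈ 𝓝[>] 0)).exists
    exact ⟨δ, h.2, h.1.2, h.1.1⟩
  let P : SobTriple N (ENNReal.ofReal p) →L[ℝ] SobPair N (ENNReal.ofReal p) :=
    (ContinuousLinearMap.fst ℝ _ _).prod
      ((ContinuousLinearMap.fst ℝ _ _).comp (ContinuousLinearMap.snd ℝ _ _))
  have hPw : ∀ w : SobTriple N (ENNReal.ofReal p), P w = (w.1, w.2.1) := fun w => rfl
  have hD : K ⊆ closure (P '' (testSub N (ENNReal.ofReal p) p Ω V)) := by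
    refine hKW.trans (closure_mono ?_)
    rintro w ⟨ψ, hψ, e1, e2⟩
    have m1 := hψ.memLp (ENNReal.ofReal p)
    have m2 := hψ.memLp_grad (ENNReal.ofReal p)
    have m3 := memLp_Vpow hp hV hV0 hψ
    refine ⟨(m1.toLp _, m2.toLp _, m3.toLp _), ⟨ψ, hψ, m1.coeFn_toLp, m2.coeFn_toLp, m3.coeFn_toLp⟩, ?_⟩
    rw [hPw]
    refine Prod.ext ?_ ?_
    · exact Lp.ext (m1.coeFn_toLp.trans e1.symm)
    · exact Lp.ext (m2.coeFn_toLp.trans e2.symm)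
  obtain ⟨T, hTc, hTo, hTD, hTn⟩ := odd_lift P (testSub N (ENNReal.ofReal p) p Ω V) hKc hKs hD hδ0
  have hw1 : ∀ w ∈ K, ‖w.1‖ = 1 := by
    intro w hw
    have h := hK1 w hw
    have h2 := Lp_int_eq hp w.1
    simp only [Real.norm_eq_abs] at h2
    rw [h] at h2
    have h3 : ‖w.1‖ = (‖w.1‖ ^ p) ^ (1 / p) := by
      rw [← Real.rpow_mul (norm_nonneg _), mul_one_div_cancel hp0.ne', Real.rpow_one]
    rw [h3, ← h2, Real.one_rpow]
  have hw2 : ∀ w ∈ K, ‖w.2‖ ≤ m := by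
    intro w hw
    have h := hsup w hw
    rw [Lp_int_eq hp w.2, ← hmp] at h
    exact (Real.rpow_le_rpow_iff (norm_nonneg _) hm0 hp0).1 h
  have hT1 : ∀ w ∈ K, 1 - δ ≤ ‖(T w).1‖ := by
    intro w hw
    have h1 : ‖(T w).1 - w.1‖ ≤ δ := (norm_fst_le (P (T w) - w)).trans (hTn w hw)
    have h2 := norm_sub_norm_le w.1 (T w).1
    rw [norm_sub_rev, hw1 w hw] at h2
    linarith
  have hT2 : ∀ w ∈ K, ‖(T w).2.1‖ ≤ m + δ := by
    intro w hw
    have h1 : ‖(T w).2.1 - w.2‖ ≤ δ := (norm_snd_le (P (T w) - w)).trans (hTn w hw)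
    have h2 := norm_sub_norm_le (T w).2.1 w.2
    have := hw2 w hw
    linarith
  set S : SobPair N (ENNReal.ofReal p) → SobTriple N (ENNReal.ofReal p) := fun w => ‖(T w).1‖⁻¹ • T w with hS
  have hSc : ContinuousOn S K := by
    refine ContinuousOn.smul (ContinuousOn.inv₀ hTc.fst.norm fun w hw => ?_) hTc
    have := hT1 w hw
    linarith
  have hSo : ∀ w, S (-w) = -S w := by
    intro w
    simp only [hS, hTo, Prod.fst_neg, norm_neg, smul_neg]
  have hSc' : IsCompact (S '' K) := hKc.image_of_continuousOn hSc
  obtain ⟨b, hb⟩ := hSc'.isBounded.exists_norm_le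
  refine ⟨((m + δ) / (1 - δ)) ^ p, b ^ p, hδ, ?_⟩
  intro ε hε ℓ hℓ
  have hmem : S '' K ∈ SobClassV N p hp.le Ω V ℓ := by
    refine ⟨?_, ?_, ?_, hSc', ?_⟩
    · rintro _ ⟨w, hw, rfl⟩
      exact subset_closure ((testSub N (ENNReal.ofReal p) p Ω V).smul_mem _ (hTD w))
    · rintro _ ⟨w, hw, rfl⟩
      have h := Lp_int_eq hp (S w).1
      simp only [Real.norm_eq_abs] at h
      rw [h]
      have h1 : (S w).1 = ‖(T w).1‖⁻¹ • (T w).1 := rfl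
      have h2 := hT1 w hw
      rw [h1, norm_smul, norm_inv, norm_norm, inv_mul_cancel₀ (by linarith), Real.one_rpow]
    · rintro _ ⟨w, hw, rfl⟩
      exact ⟨-w, hKs w hw, hSo w⟩
    · rintro j ⟨f, hf1, hf2, hf3⟩
      refine hℓ.trans (hKg j ⟨f ∘ S, hf1.comp hSc (mapsTo_image _ _), fun w hw => hf2 _ ⟨w, hw, rfl⟩, fun w hw => ?_⟩)
      simp only [Function.comp_apply, hSo]
      exact hf3 _ ⟨w, hw, rfl⟩
  refine (iInf₂_le _ hmem).trans (iSup₂_le ?_)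
  rintro v ⟨w, hw, rfl⟩
  refine ENNReal.ofReal_le_ofReal ?_
  have e1 := Lp_int_eq hp (S w).2.1
  have e2 := Lp_int_eq hp (S w).2.2
  simp only [Real.norm_eq_abs] at e2
  rw [e1, e2]
  have h1 : ‖(S w).2.1‖ ≤ (m + δ) / (1 - δ) := by
    have h1 : (S w).2.1 = ‖(T w).1‖⁻¹ • (T w).2.1 := rfl
    have h2 := hT1 w hw
    have h3 := hT2 w hw
    have h4 : 0 < 1 - δ := by linarith
    rw [h1, norm_smul, norm_inv, norm_norm, inv_mul_eq_div]
    gcongr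
  have h2 : ‖(S w).2.2‖ ≤ b :=
    (norm_snd_le (S w).2).trans ((norm_snd_le (S w)).trans (hb _ ⟨w, hw, rfl⟩))
  gcongr

end part11

section part12

variable {N : ℕ} {p : ℝ}

lemma exp_decay (hp : 1 < p) (N : ℕ) {Λ L : ℝ} (hΛ : 0 ≤ Λ) (hL : Λ < L) (R : ℝ) :
    ∃ C > (0 : ℝ), ∃ α > (0 : ℝ), ∀ (Ω : Set (EucN N)) (V : EucN N → ℝ),
      LocallyIntegrable V volume → (∀ᵐ x, 0 ≤ V x) →
      ENNReal.ofReal L ≤ lambda1p N p hp.le (Ω \ closure (ball (0 : EucN N) R)) →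
      ∀ (ε lam : ℝ), 0 ≤ ε → 0 ≤ lam → lam ≤ Λ →
      ∀ w : SobTriple N (ENNReal.ofReal p), IsCriticalV N p hp.le Ω V ε lam w →
      ∀ᵐ x, |w.1 x| ≤ C * Real.exp (-α * ‖x‖) := by
  have hp0 : 0 < p := by linarith
  obtain ⟨θ, hθ0, hθ1, htail⟩ := tail_decay hp hΛ hL
  obtain ⟨H, hH, hdg⟩ := de_giorgi hp N hΛ
  set α : ℝ := -Real.log θ / p with hα
  have hα0 : 0 < α := div_pos (neg_pos.2 (Real.log_neg hθ0 hθ1)) hp0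
  have hθα : ∀ j : ℕ, (θ ^ j) ^ (1 / p) = Real.exp (-α * j) := by
    intro j
    rw [Real.rpow_def_of_pos (by positivity), Real.log_pow, hα]
    congr 1; field_simp
  set r₀ : ℝ := 2 + |R| with hr₀
  have hR : R ≤ |R| := le_abs_self R
  have hR0 : 0 ≤ |R| := abs_nonneg R
  refine ⟨H ^ (1 / p) * Real.exp (α * (r₀ + 2)), by positivity, α, hα0, ?_⟩
  intro Ω V hV hV0 hLam ε lam hε hlam0 hlam w hw
  have hd := hdg Ω V hV hV0 ε lam hε hlam0 hlam w hw
  have ht := htail N Ω V hV hV0 ε lam hε hlam0 hlam w hw R hLam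
  obtain ⟨hA, -⟩ := W10V.appr hp hV hw.1
  have iu : Integrable (fun x => |w.1 x| ^ p) volume := integrable_rpow hp hA.mu
  have h1 : ∀ r, ∫ x in outer N r, |w.1 x| ^ p ≤ 1 := by
    intro r
    rw [← hw.2.1]
    exact setIntegral_le_integral iu (Eventually.of_forall fun x => by
      simp only [Pi.zero_apply]; positivity)
  have h2 : ∀ j : ℕ, ∫ x in outer N (r₀ + j), |w.1 x| ^ p ≤ θ ^ j := by
    intro j
    induction j with
    | zero => simpa using h1 _
    | succ j ih =>
      have hj : (0:ℝ) ≤ j := Nat.cast_nonneg j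
      have h := ht (r₀ + j) (by linarith)
      push_cast
      rw [← add_assoc, pow_succ, mul_comm]
      exact h.trans (mul_le_mul_of_nonneg_left ih hθ0.le)
  have hpw : ∀ y : ℝ, 0 ≤ y → (y ^ (1 / p)) ^ p = y := by
    intro y hy
    rw [← Real.rpow_mul hy, one_div_mul_cancel hp0.ne', Real.rpow_one]
  have g0 := hd (-1) (H ^ (1 / p)) (by positivity) (by
    rw [hpw H hH.le]; nlinarith [h1 (-1)])
  have g1 : ∀ᵐ x, ∀ j : ℕ, x ∈ outer N (r₀ + j + 1) → |w.1 x| ≤ (H * θ ^ j) ^ (1 / p) := by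
    rw [ae_all_iff]
    intro j
    refine hd _ _ (by positivity) ?_
    rw [hpw _ (by positivity)]
    exact mul_le_mul_of_nonneg_left (h2 j) hH.le
  filter_upwards [g0, g1] with x e0 e1
  have hjb := norm_le_jb x
  rw [mul_assoc, ← Real.exp_add]
  by_cases hx : jb x ≤ r₀ + 1
  · have h3 := e0 (by
      change -1 + 1 < jb x
      have := one_le_jb x
      linarith)
    refine h3.trans (le_mul_of_one_le_right (by positivity) (Real.one_le_exp ?_))
    nlinarith
  · have hx' : 0 < jb x - (r₀ + 1) := by linarith
    set m : ℕ := ⌈jb x - (r₀ + 1)⌉₊ with hm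
    have hm0 : 0 < m := Nat.ceil_pos.2 hx'
    obtain ⟨j, hj⟩ : ∃ j, m = j + 1 := ⟨m - 1, by omega⟩
    have hlo : (m:ℝ) < jb x - (r₀ + 1) + 1 := Nat.ceil_lt_add_one hx'.le
    have hhi : jb x - (r₀ + 1) ≤ m := Nat.le_ceil _
    rw [hj] at hlo hhi
    push_cast at hlo hhi
    have h3 := e1 j (by
      change r₀ + j + 1 < jb x
      linarith)
    refine h3.trans ?_
    rw [Real.mul_rpow hH.le (by positivity), hθα]
    refine mul_le_mul_of_nonneg_left (Real.exp_le_exp.2 ?_) (by positivity)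
    nlinarith

end part12

theorem statement15 (N : ℕ) (p : ℝ) (hp1 : 1 < p) (Ω : Set (EucN N)) (hΩ : IsOpen Ω)
    (hE : Einfty N p hp1.le Ω ≠ ⊤)
    (k : ℕ) (hk : k ≠ 0) (hlt : lambdaLS N p hp1.le Ω k < Einfty N p hp1.le Ω)
    (V : EucN N → ℝ) (hV : StronglyConfining N V)
    (ε : ℕ → ℝ) (hεpos : ∀ n, 0 < ε n) (hεdec : Antitone ε) (hεlim : Tendsto ε atTop (𝓝 0))
    (u : ℕ → ℕ → SobTriple N (ENNReal.ofReal p))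
    (hu : ∀ ℓ n, 1 ≤ ℓ → ℓ ≤ k →
      IsCriticalV N p hp1.le Ω V (ε n) ((lambdaLSV N p hp1.le Ω V (ε n) ℓ).toReal) (u ℓ n)) :
    ∀ ℓ, 1 ≤ ℓ → ℓ ≤ k → ∃ n₀ : ℕ, ∃ C > (0 : ℝ), ∃ α > (0 : ℝ), ∀ n ≥ n₀,
      ∀ᵐ x, x ∈ Ω → |(u ℓ n).1 x| ≤ C * Real.exp (-α * ‖x‖) := by
  intro ℓ hℓ1 hℓk
  obtain ⟨hVl, hV0, -⟩ := hV
  obtain ⟨Λ₁, hΛ₁, h1E⟩ := ENNReal.lt_iff_exists_nnreal_btwn.1 hlt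
  obtain ⟨Λ, hΛ, hΛE⟩ := ENNReal.lt_iff_exists_nnreal_btwn.1 h1E
  obtain ⟨L, hL, hLE⟩ := ENNReal.lt_iff_exists_nnreal_btwn.1 hΛE
  rw [ENNReal.coe_lt_coe] at hΛ hL
  obtain ⟨R, hR⟩ := lt_iSup_iff.1 hLE
  obtain ⟨-, hR⟩ := lt_iSup_iff.1 hR
  obtain ⟨K, hK⟩ := iInf_lt_iff.1 hΛ₁
  obtain ⟨hKm, hK⟩ := iInf_lt_iff.1 hK
  have hsup : ∀ w ∈ K, ∫ x, ‖w.2 x‖ ^ p ≤ (Λ₁ : ℝ) := by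
    intro w hw
    have h1 := (le_iSup₂ (f := fun (w : SobPair N (ENNReal.ofReal p)) (_ : w ∈ K) =>
      ENNReal.ofReal (∫ x, ‖w.2 x‖ ^ p)) w hw).trans hK.le
    rw [← ENNReal.ofReal_coe_nnreal] at h1
    exact (ENNReal.ofReal_le_ofReal_iff Λ₁.2).1 h1
  obtain ⟨c, B, hc, hB⟩ := minmax hp1 hVl hV0 hKm (Λ := (Λ : ℝ)) Λ₁.2 (by exact_mod_cast hΛ) hsup
  have hlim : Tendsto (fun n => c + ε n * B) atTop (𝓝 c) := by
    simpa using (hεlim.mul_const B).const_add c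
  obtain ⟨n₀, hn₀⟩ := eventually_atTop.1 (hlim.eventually_lt_const hc)
  obtain ⟨C, hC, α, hα, hexp⟩ := exp_decay hp1 N (Λ := (Λ : ℝ)) (L := (L : ℝ)) Λ.2 (by exact_mod_cast hL) R
  refine ⟨n₀, C, hC, α, hα, fun n hn => ?_⟩
  have hlam : (lambdaLSV N p hp1.le Ω V (ε n) ℓ).toReal ≤ (Λ : ℝ) := by
    refine ENNReal.toReal_le_of_le_ofReal Λ.2 ((hB (ε n) (hεpos n).le ℓ hℓk).trans ?_)
    exact ENNReal.ofReal_le_ofReal (hn₀ n hn).le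
  have h := hexp Ω V hVl hV0 (by rw [ENNReal.ofReal_coe_nnreal]; exact hR.le) (ε n) _ (hεpos n).le
    ENNReal.toReal_nonneg hlam (u ℓ n) (hu ℓ n hℓ1 hℓk)
  filter_upwards [h] with x hx _
  exact hx

end
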